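/- Let s ∈ ℂ with −1 < Re s < 1 and s ≠ 0, and let x > 0 be real. Define φ(t,s) := 2 ∑_{n=1}^∞ σ_{−s}(n) n^{s/2} ( e^{πis/4} K_s(4π e^{iπ/4} √(nt)) + e^{−πis/4} K_s(4π e^{−iπ/4} √(nt)) ) for t > 0 (note that the arguments 4π e^{±iπ/4}√(nt) have positive real part, so K_s is given by its defining integral). Then f(x,s) = (2/π)·x^{−s/2} ∫_0^∞ ( t^{1+s/2}/(x² + t²) ) · ( φ(t,s) − (ζ(s)/(2π))·t^{s/2−1} ) dt. -/

import Mathlib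

open Complex Finset MeasureTheory
open scoped Real BigOperators Classical

/-- Generalized divisor sum `σ_s(n) = ∑_{d ∣ n} d^s` with complex exponent. -/
noncomputable def csigma (s : ℂ) (n : ℕ) : ℂ := ∑ d ∈ n.divisors, (d : ℂ) ^ s

/-- The modified Bessel function of the second kind,
`K_ν(z) = ∫_0^∞ e^{-z cosh t} cosh(ν t) dt` (for `Re z > 0`). -/
noncomputable def Kbes (ν z : ℂ) : ℂ :=
  ∫ t in Set.Ioi (0 : ℝ), Complex.exp (-z * (Real.cosh t : ℂ)) * Complex.cosh (ν * (t : ℂ))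

/-- The function `f(x,s)` of Theorem `newthm`; the term at `n = x` (when `x` is a
positive integer) is interpreted as its limiting value `(s-1) x^{s-3} / 2`. -/
noncomputable def fRam (x : ℝ) (s : ℂ) : ℂ :=
  (x : ℂ) ^ (s / 2) * riemannZeta (1 + s) / (2 * Complex.sin ((π : ℂ) * s / 2))
  + (x : ℂ) ^ (2 - s / 2) / ((π : ℂ) * Complex.cos ((π : ℂ) * s / 2)) *
      ∑' n : ℕ, csigma (-s) (n + 1) *
        (if x = ((n : ℝ) + 1) then (s - 1) * ((n : ℂ) + 1) ^ (s - 3) / 2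
          else (((n : ℂ) + 1) ^ (s - 1) - (x : ℂ) ^ (s - 1)) /
            (((n : ℂ) + 1) ^ 2 - (x : ℂ) ^ 2))
  - (2 : ℂ) ^ (-s) * (π : ℂ) ^ (-1 - s) * (x : ℂ) ^ (-s / 2) *
      (Complex.Gamma s * riemannZeta s *
          ((π : ℂ) * Complex.tan ((π : ℂ) * s / 2) -
            2 * ((Real.eulerMascheroniConstant : ℂ) + (Real.log x : ℂ)))
        - ((2 * π : ℝ) : ℂ) ^ s * deriv riemannZeta (1 - s) /
            Complex.cos ((π : ℂ) * s / 2))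

/-- The Koshliakov-type series `φ(t,s)`. -/
noncomputable def phiK (t : ℝ) (s : ℂ) : ℂ :=
  2 * ∑' n : ℕ, csigma (-s) (n + 1) * ((n : ℂ) + 1) ^ (s / 2) *
    (Complex.exp ((π : ℂ) * Complex.I * s / 4) *
        Kbes s (4 * (π : ℂ) * Complex.exp ((π : ℂ) * Complex.I / 4) *
          (Real.sqrt (((n : ℝ) + 1) * t) : ℂ))
      + Complex.exp (-(π : ℂ) * Complex.I * s / 4) *
        Kbes s (4 * (π : ℂ) * Complex.exp (-(π : ℂ) * Complex.I / 4) *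
          (Real.sqrt (((n : ℝ) + 1) * t) : ℂ)))


/-!
Let `S(t)` denote `∑ σ_{-s}(n) / (n² + t²)`. For `Re s > 1`, unfolding `σ_{-s}`, writing each Bessel
function as a Laplace-type integral and applying Poisson summation in one of the two divisors turns
`phiK t s` into `S(t)` plus elementary terms: this is Guinand's formula, which extends to smaller
`Re s` by continuation. Divided by `x² + t²`, it is integrated against `t^(w-1)` instead of the
single power that the theorem needs. For small `Re w` the transform may be taken term by term, and
`∫ t^(w+1) / ((x² + t²) (n² + t²)) dt` is a multiple of
`(n^w - x^w) / (n² - x²) = n^(w-2) + x² (n^(w-2) - x^(w-2)) / (n² - x²)`.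
The first summand contributes `ζ(2 - w) ζ(2 - w + s)`, the second becomes the series of `fRam` at
`w = 1 + s`. Both sides are meromorphic in `w`, so the evaluation persists up to that point. There
the pole of `ζ(2 - w + s)` meets the pole of a secant; they cancel, and what remains of the two
Laurent expansions is the part of `fRam` containing `γ + log x` and `ζ'(1 - s)`.
-/

open Filter Topology

section HolomorphicIntegral

variable {α E : Type*} [MeasurableSpace α] {μ : Measure α} [NormedAddCommGroup E] [NormedSpace ℂ E]
  {F : ℂ → α → E} {z₀ : ℂ} {U : Set ℂ}

theorem aestronglyMeasurable_deriv_param (hU : U ∈ 𝓝 z₀)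
    (hmeas : ∀ z ∈ U, AEStronglyMeasurable (F z) μ)
    (hdiff : ∀ᵐ a ∂μ, DifferentiableAt ℂ (fun z => F z a) z₀) :
    AEStronglyMeasurable (fun a => deriv (fun z => F z a) z₀) μ := by
  obtain ⟨u, -, hu0, hu⟩ := exists_seq_strictAnti_tendsto (0 : ℝ)
  have hu' : Tendsto (fun n => (u n : ℂ)) atTop (𝓝[≠] 0) :=
    tendsto_nhdsWithin_iff.mpr ⟨(continuous_ofReal.tendsto' 0 0 ofReal_zero).comp hu,
      .of_forall fun n => by simpa using (hu0 n).ne'⟩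
  have hmem : ∀ᶠ n in atTop, z₀ + (u n : ℂ) ∈ U := by
    have : Tendsto (fun n => z₀ + (u n : ℂ)) atTop (𝓝 z₀) := by
      simpa using (tendsto_nhdsWithin_iff.mp hu').1.const_add z₀
    exact this hU
  obtain ⟨N, hN⟩ := eventually_atTop.mp hmem
  refine aestronglyMeasurable_of_tendsto_ae atTop
    (f := fun n a => (u (n + N) : ℂ)⁻¹ • (F (z₀ + u (n + N)) a - F z₀ a)) (fun n => ?_) ?_
  · exact ((hmeas _ (hN _ (by lia))).sub
      (hmeas _ (mem_of_mem_nhds hU))).const_smul (u (n + N) : ℂ)⁻¹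
  · filter_upwards [hdiff] with a ha
    exact (hasDerivAt_iff_tendsto_slope_zero.mp ha.hasDerivAt).comp
      (hu'.comp (tendsto_add_atTop_nat N))

/-- The derivatives are dominated thanks to Cauchy's estimate. -/
theorem differentiableAt_integral_of_dominated [CompleteSpace E] {bound : α → ℝ} (hU : U ∈ 𝓝 z₀)
    (hmeas : ∀ z ∈ U, AEStronglyMeasurable (F z) μ)
    (hdiff : ∀ᵐ a ∂μ, DifferentiableOn ℂ (fun z => F z a) U)
    (hbound : Integrable bound μ) (hle : ∀ᵐ a ∂μ, ∀ z ∈ U, ‖F z a‖ ≤ bound a) :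
    DifferentiableAt ℂ (fun z => ∫ a, F z a ∂μ) z₀ := by
  obtain ⟨r, hr, hrU⟩ := Metric.nhds_basis_ball.mem_iff.mp hU
  have hsub : ∀ z ∈ Metric.ball z₀ (r / 2), Metric.closedBall z (r / 4) ⊆ U := fun z hz y hy =>
    hrU (by rw [Metric.mem_ball, Metric.mem_closedBall] at *; linarith [dist_triangle y z z₀])
  refine (hasDerivAt_integral_of_dominated_loc_of_deriv_le (F := F)
    (F' := fun z a => deriv (fun z => F z a) z) (bound := fun a => bound a / (r / 4))
    (Metric.ball_mem_nhds z₀ (half_pos hr)) (mem_of_superset hU hmeas)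
    (hbound.mono' (hmeas _ (mem_of_mem_nhds hU)) (hle.mono fun a ha => ha _ (mem_of_mem_nhds hU)))
    (aestronglyMeasurable_deriv_param hU hmeas (hdiff.mono fun a ha => ha.differentiableAt hU))
    ?_ (hbound.div_const _) ?_).2.differentiableAt
  · filter_upwards [hdiff, hle] with a ha hle z hz
    refine norm_deriv_le_of_forall_mem_sphere_norm_le (by positivity) ?_ fun w hw =>
      hle w (hsub z hz (Metric.sphere_subset_closedBall hw))
    refine DifferentiableOn.diffContOnCl ?_
    rw [closure_ball _ (by positivity)]
    exact ha.mono (hsub z hz)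
  · filter_upwards [hdiff] with a ha z hz
    exact (ha.differentiableAt (mem_of_superset (Metric.closedBall_mem_nhds z (by positivity))
      (hsub z hz))).hasDerivAt

end HolomorphicIntegral

section Meromorphic

theorem eventuallyEq_of_meromorphicOn_of_isPreconnected {f g : ℂ → ℂ} {U : Set ℂ}
    (hf : MeromorphicOn f U) (hg : MeromorphicOn g U) (hU : IsPreconnected U) {z₀ z : ℂ}
    (hz₀ : z₀ ∈ U) (hz : z ∈ U) (h : f =ᶠ[𝓝[≠] z₀] g) : f =ᶠ[𝓝[≠] z] g := by
  have hfg : MeromorphicOn (f - g) U := hf.sub hg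
  have htop : meromorphicOrderAt (f - g) z = ⊤ := by
    by_contra hne
    refine hfg.meromorphicOrderAt_ne_top_of_isPreconnected hU hz hz₀ hne
      (meromorphicOrderAt_eq_top_iff.mpr ?_)
    filter_upwards [h] with w hw using sub_eq_zero.mpr hw
  filter_upwards [meromorphicOrderAt_eq_top_iff.mp htop] with w hw using sub_eq_zero.mp hw

theorem eq_of_meromorphicOn_of_isPreconnected {f g : ℂ → ℂ} {U : Set ℂ}
    (hf : MeromorphicOn f U) (hg : MeromorphicOn g U) (hU : IsPreconnected U) {z₀ z : ℂ}
    (hz₀ : z₀ ∈ U) (hz : z ∈ U) (h : f =ᶠ[𝓝[≠] z₀] g) (hfz : ContinuousAt f z)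
    (hgz : ContinuousAt g z) : f z = g z :=
  tendsto_nhds_unique_of_eventuallyEq (hfz.mono_left nhdsWithin_le_nhds)
    (hgz.mono_left nhdsWithin_le_nhds)
    (eventuallyEq_of_meromorphicOn_of_isPreconnected hf hg hU hz₀ hz h)

theorem analyticAt_const_cpow {a z : ℂ} {f : ℂ → ℂ} (ha : a ≠ 0) (hf : AnalyticAt ℂ f z) :
    AnalyticAt ℂ (fun w => a ^ f w) z := by
  simp only [cpow_def_of_ne_zero ha]
  fun_prop

theorem meromorphicAt_riemannZeta (s : ℂ) : MeromorphicAt riemannZeta s := by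
  have hLambda : MeromorphicAt completedRiemannZeta s := by
    have h₀ : MeromorphicAt completedRiemannZeta₀ s :=
      (differentiable_completedZeta₀.analyticAt s).meromorphicAt
    have : completedRiemannZeta = fun s => completedRiemannZeta₀ s - 1 / s - 1 / (1 - s) :=
      funext completedRiemannZeta_eq
    rw [this]
    fun_prop
  have hGamma : MeromorphicAt (fun s => (Gammaℝ s)⁻¹) s :=
    (differentiable_Gammaℝ_inv.analyticAt s).meromorphicAt
  refine (hLambda.mul hGamma).congr ?_
  have hne : ∀ᶠ w in 𝓝[≠] s, w ≠ 0 := by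
    rcases eq_or_ne s 0 with rfl | hs
    · exact self_mem_nhdsWithin
    · exact (eventually_ne_nhds hs).filter_mono nhdsWithin_le_nhds
  filter_upwards [hne] with w hw
  rw [Pi.mul_apply, riemannZeta_def_of_ne_zero hw, div_eq_mul_inv]

end Meromorphic

section Bessel

theorem norm_cosh_le (z : ℂ) : ‖Complex.cosh z‖ ≤ Real.cosh z.re := by
  have := norm_add_le (cexp z) (cexp (-z))
  rw [Complex.norm_exp, Complex.norm_exp, neg_re] at this
  rw [Complex.cosh, Real.cosh_eq, norm_div, Complex.norm_ofNat]
  gcongr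

theorem cosh_le_exp_abs (x : ℝ) : Real.cosh x ≤ Real.exp |x| := by
  rw [← Real.cosh_abs, Real.cosh_eq]
  linarith [Real.exp_le_exp.mpr (neg_le_self (abs_nonneg x))]

theorem sq_div_four_le_cosh {u : ℝ} (hu : 0 ≤ u) : u ^ 2 / 4 ≤ Real.cosh u := by
  rw [Real.cosh_eq]
  nlinarith [Real.quadratic_le_exp_of_nonneg hu, Real.exp_pos (-u)]

/-- Completing the square in `(R + 1) u - c u ^ 2 / 4`. -/
theorem exp_neg_mul_cosh_add_le {R c a u : ℝ} (hc : 0 < c) (ha : c ≤ a) (hu : 0 ≤ u) :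
    Real.exp (-a * Real.cosh u + R * u) ≤
      Real.exp ((R + 1) ^ 2 / c + c - a) * Real.exp (-u) := by
  have hsquare : (R + 1) * u - c * (u ^ 2 / 4) ≤ (R + 1) ^ 2 / c := by
    rw [le_div_iff₀ hc]
    nlinarith [sq_nonneg ((R + 1) - c * u / 2)]
  have hquad := mul_le_mul_of_nonneg_left (sq_div_four_le_cosh hu) hc.le
  have hone := mul_le_mul_of_nonneg_left (Real.one_le_cosh u) (sub_nonneg.mpr ha)
  rw [← Real.exp_add, Real.exp_le_exp]
  linarith

theorem norm_Kbes_integrand_le {s z : ℂ} {R c u : ℝ} (hc : 0 < c) (hz : c ≤ z.re)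
    (hs : |s.re| ≤ R) (hu : 0 ≤ u) :
    ‖cexp (-z * (Real.cosh u : ℂ)) * Complex.cosh (s * (u : ℂ))‖ ≤
      Real.exp ((R + 1) ^ 2 / c + c - z.re) * Real.exp (-u) := by
  refine le_trans ?_ (exp_neg_mul_cosh_add_le hc hz hu)
  rw [norm_mul, Complex.norm_exp, re_mul_ofReal, neg_re, Real.exp_add]
  gcongr
  refine (norm_cosh_le _).trans ((cosh_le_exp_abs _).trans (Real.exp_le_exp.mpr ?_))
  rw [re_mul_ofReal, abs_mul, abs_of_nonneg hu]
  gcongr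

theorem norm_Kbes_le {s z : ℂ} {R c : ℝ} (hc : 0 < c) (hz : c ≤ z.re) (hs : |s.re| ≤ R) :
    ‖Kbes s z‖ ≤ Real.exp ((R + 1) ^ 2 / c + c - z.re) := by
  refine (norm_integral_le_of_norm_le ((integrableOn_exp_neg_Ioi 0).const_mul _) ?_).trans_eq
    (by rw [integral_const_mul, integral_exp_neg_Ioi_zero, mul_one])
  filter_upwards [ae_restrict_mem measurableSet_Ioi] with u hu
  exact norm_Kbes_integrand_le hc hz hs (le_of_lt hu)

theorem differentiable_Kbes_order {z : ℂ} (hz : 0 < z.re) : Differentiable ℂ fun s => Kbes s z := by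
  intro s
  refine differentiableAt_integral_of_dominated (Metric.ball_mem_nhds s one_pos)
    (fun w _ => Continuous.aestronglyMeasurable (by fun_prop))
    (.of_forall fun u => Differentiable.differentiableOn (by fun_prop))
    ((integrableOn_exp_neg_Ioi 0).const_mul (Real.exp ((‖s‖ + 1 + 1) ^ 2 / z.re + z.re - z.re))) ?_
  filter_upwards [ae_restrict_mem measurableSet_Ioi] with u hu w hw
  refine norm_Kbes_integrand_le hz le_rfl ((abs_re_le_norm w).trans ?_) (le_of_lt hu)
  linarith [norm_le_norm_add_norm_sub' w s, mem_ball_iff_norm.mp hw]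

theorem differentiableAt_Kbes (s : ℂ) {z : ℂ} (hz : 0 < z.re) :
    DifferentiableAt ℂ (fun z => Kbes s z) z := by
  have hz2 : 0 < z.re / 2 := half_pos hz
  refine differentiableAt_integral_of_dominated
    ((isOpen_lt continuous_const continuous_re).mem_nhds (half_lt_self hz : z.re / 2 < z.re))
    (fun w _ => Continuous.aestronglyMeasurable (by fun_prop))
    (.of_forall fun u => Differentiable.differentiableOn (by fun_prop))
    ((integrableOn_exp_neg_Ioi 0).const_mul (Real.exp ((|s.re| + 1) ^ 2 / (z.re / 2)))) ?_
  filter_upwards [ae_restrict_mem measurableSet_Ioi] with u hu w hw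
  have hw' : z.re / 2 ≤ w.re := le_of_lt hw
  refine (norm_Kbes_integrand_le hz2 hw' le_rfl (le_of_lt hu)).trans ?_
  gcongr
  linarith

theorem integrable_exp_neg_abs : Integrable fun x : ℝ => Real.exp (-|x|) := by
  rw [← integrableOn_univ, ← Set.Iic_union_Ioi (a := (0 : ℝ)), integrableOn_union]
  constructor
  · refine (integrableOn_exp_Iic 0).congr_fun (fun x hx => ?_) measurableSet_Iic
    rw [abs_of_nonpos hx, neg_neg]
  · refine (integrableOn_exp_neg_Ioi 0).congr_fun (fun x hx => ?_) measurableSet_Ioi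
    rw [abs_of_pos hx]

theorem integrable_exp_mul_exp_neg_cosh (s : ℂ) {c : ℝ} (hc : 0 < c) :
    Integrable fun x : ℝ => cexp (-s * x) * cexp (-c * Real.cosh x) := by
  refine (integrable_exp_neg_abs.const_mul (Real.exp ((|s.re| + 1) ^ 2 / c + c - c))).mono'
    (Continuous.aestronglyMeasurable (by fun_prop)) (.of_forall fun x => ?_)
  refine le_trans ?_ (exp_neg_mul_cosh_add_le (R := |s.re|) hc le_rfl (abs_nonneg x))
  rw [norm_mul, Complex.norm_exp, Complex.norm_exp, re_mul_ofReal, re_mul_ofReal, neg_re, neg_re,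
    ofReal_re, Real.cosh_abs, ← Real.exp_add, Real.exp_le_exp, ← abs_mul]
  linarith [neg_abs_le (s.re * x)]

/-- Summing the integrand at `x` and `-x` folds the line onto the half line defining `Kbes`. -/
theorem integral_exp_mul_exp_neg_cosh (s : ℂ) {c : ℝ} (hc : 0 < c) :
    ∫ x : ℝ, cexp (-s * x) * cexp (-c * Real.cosh x) = 2 * Kbes s c := by
  have hs := integrable_exp_mul_exp_neg_cosh s hc
  have hneg := integral_comp_neg_Ioi 0 fun x : ℝ => cexp (-s * x) * cexp (-c * Real.cosh x)
  rw [neg_zero] at hneg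
  rw [← intervalIntegral.integral_Iic_add_Ioi (b := 0) hs.integrableOn hs.integrableOn, ← hneg,
    ← integral_add hs.comp_neg.integrableOn hs.integrableOn, Kbes, ← integral_const_mul]
  congr with x
  rw [Real.cosh_neg, Complex.cosh]
  push_cast
  ring_nf

end Bessel

section InverseGamma

/-- The inverse gamma density `y ^ (-s - 1) * exp (-b / y)` on the positive axis, extended by zero
so that Poisson summation on the line applies to it. -/
noncomputable def invGammaKernel (s : ℂ) (b y : ℝ) : ℂ :=
  if 0 < y then (y : ℂ) ^ (-s - 1) * cexp (-b / y) else 0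

variable {s : ℂ} {b : ℝ}

theorem invGammaKernel_of_pos (s : ℂ) (b : ℝ) {y : ℝ} (hy : 0 < y) :
    invGammaKernel s b y = (y : ℂ) ^ (-s - 1) * cexp (-b / y) := if_pos hy

theorem invGammaKernel_of_nonpos (s : ℂ) (b : ℝ) {y : ℝ} (hy : y ≤ 0) :
    invGammaKernel s b y = 0 := if_neg hy.not_gt

theorem norm_invGammaKernel (s : ℂ) (b : ℝ) {y : ℝ} (hy : 0 < y) :
    ‖invGammaKernel s b y‖ = y ^ (-s.re - 1) * Real.exp (-b / y) := by
  rw [invGammaKernel_of_pos s b hy, norm_mul, norm_cpow_eq_rpow_re_of_pos hy, Complex.norm_exp]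
  norm_cast

theorem norm_invGammaKernel_le (s : ℂ) (hb : 0 < b) {y : ℝ} (hy : 0 < y) :
    ‖invGammaKernel s b y‖ ≤ y ^ (-s.re - 1) := by
  rw [norm_invGammaKernel s b hy]
  exact mul_le_of_le_one_right (Real.rpow_nonneg hy.le _)
    (Real.exp_le_one_iff.mpr (div_nonpos_of_nonpos_of_nonneg (neg_nonpos.mpr hb.le) hy.le))

theorem tendsto_invGammaKernel_nhdsGT_zero (s : ℂ) (hb : 0 < b) :
    Tendsto (invGammaKernel s b) (𝓝[>] (0 : ℝ)) (𝓝 0) := by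
  rw [tendsto_zero_iff_norm_tendsto_zero]
  refine ((tendsto_rpow_mul_exp_neg_mul_atTop_nhds_zero (s.re + 1) b hb).comp
    tendsto_inv_nhdsGT_zero).congr' ?_
  filter_upwards [self_mem_nhdsWithin] with y (hy : 0 < y)
  rw [norm_invGammaKernel s b hy, Function.comp_apply, Real.inv_rpow hy.le, ← Real.rpow_neg hy.le]
  ring_nf

theorem continuous_invGammaKernel (s : ℂ) (hb : 0 < b) : Continuous (invGammaKernel s b) := by
  refine continuous_iff_continuousAt.mpr fun y => ?_
  rcases lt_trichotomy y 0 with hy | rfl | hy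
  · refine (continuousAt_const (y := (0 : ℂ))).congr ?_
    filter_upwards [gt_mem_nhds hy] with z hz using (invGammaKernel_of_nonpos s b hz.le).symm
  · rw [ContinuousAt, invGammaKernel_of_nonpos s b le_rfl, ← nhdsLE_sup_nhdsGT, Filter.tendsto_sup]
    refine ⟨tendsto_const_nhds.congr' ?_, tendsto_invGammaKernel_nhdsGT_zero s hb⟩
    filter_upwards [self_mem_nhdsWithin] with z hz using (invGammaKernel_of_nonpos s b hz).symm
  · have hcpow := continuousAt_ofReal_cpow_const y (-s - 1) (Or.inr hy.ne')
    have hexp : ContinuousAt (fun y : ℝ => cexp (-b / y)) y :=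
      (continuousAt_const.div continuous_ofReal.continuousAt (ofReal_ne_zero.mpr hy.ne')).cexp
    refine (hcpow.mul hexp).congr ?_
    filter_upwards [lt_mem_nhds hy] with z hz using (invGammaKernel_of_pos s b hz).symm

theorem integrableOn_rpow_mul_exp_neg_div {σ : ℝ} (hσ : 0 < σ) (hb : 0 < b) :
    IntegrableOn (fun y : ℝ => y ^ (-σ - 1) * Real.exp (-b / y)) (Set.Ioi 0) := by
  have hgamma := integrableOn_rpow_mul_exp_neg_mul_rpow (p := 1) (s := σ - 1) (by linarith)
    zero_lt_one hb
  refine ((integrableOn_Ioi_comp_rpow_iff _ (p := -1) (by norm_num)).mpr hgamma).congr_fun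
    (fun y hy => ?_) measurableSet_Ioi
  have hy : 0 < y := hy
  simp only [abs_neg, abs_one, one_mul, smul_eq_mul, Real.rpow_one]
  rw [← Real.rpow_mul hy.le, ← mul_assoc, ← Real.rpow_add hy, Real.rpow_neg_one, div_eq_mul_inv]
  ring_nf

theorem support_invGammaKernel_subset (s : ℂ) (b : ℝ) :
    Function.support (invGammaKernel s b) ⊆ Set.Ioi 0 := fun _ hy =>
  not_le.mp fun h => hy (invGammaKernel_of_nonpos s b h)

theorem integrable_invGammaKernel (hs : 0 < s.re) (hb : 0 < b) :
    Integrable (invGammaKernel s b) := by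
  rw [← integrableOn_iff_integrable_of_support_subset (support_invGammaKernel_subset s b)]
  refine (integrableOn_rpow_mul_exp_neg_div hs hb).mono'
    (continuous_invGammaKernel s hb).aestronglyMeasurable ?_
  filter_upwards [ae_restrict_mem measurableSet_Ioi] with y hy using (norm_invGammaKernel s b hy).le

theorem integral_invGammaKernel (hs : 0 < s.re) (hb : 0 < b) :
    ∫ y, invGammaKernel s b y = Complex.Gamma s * (b : ℂ) ^ (-s) := by
  have harg : ∀ {y : ℝ}, 0 < y → (y : ℂ).arg ≠ π := fun hy => by
    rw [arg_ofReal_of_nonneg hy.le]; exact Real.pi_pos.ne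
  have hinv := integral_comp_rpow_Ioi (fun v : ℝ => (v : ℂ) ^ (s - 1) * cexp (-(b * v)))
    (p := -1) (by norm_num)
  rw [integral_cpow_mul_exp_neg_mul_Ioi hs hb] at hinv
  rw [← setIntegral_eq_integral_of_forall_compl_eq_zero (s := Set.Ioi 0)
      fun y hy => invGammaKernel_of_nonpos s b (not_lt.mp hy),
    mul_comm, cpow_neg, ← inv_cpow _ _ (harg hb), ← one_div, ← hinv]
  refine setIntegral_congr_fun measurableSet_Ioi fun y hy => ?_
  have hy : 0 < y := hy
  simp only [abs_neg, abs_one, one_mul, real_smul]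
  rw [invGammaKernel_of_pos s b hy, Real.rpow_neg_one, ofReal_inv, inv_cpow _ _ (harg hy),
    ← cpow_neg, ofReal_cpow hy.le, ← mul_assoc, ← cpow_add _ _ (ofReal_ne_zero.mpr hy.ne')]
  congr 2
  · push_cast; ring
  · ring

/-- The Laplace transform of `invGammaKernel`, which on the imaginary axis is its Fourier
transform. -/
noncomputable def invGammaLaplace (s : ℂ) (b : ℝ) (a : ℂ) : ℂ :=
  ∫ y : ℝ, cexp (-a * y) * invGammaKernel s b y

theorem norm_invGammaLaplace_integrand_le (s : ℂ) (b : ℝ) {a : ℂ} (ha : 0 ≤ a.re) (y : ℝ) :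
    ‖cexp (-a * y) * invGammaKernel s b y‖ ≤ ‖invGammaKernel s b y‖ := by
  rcases le_or_gt y 0 with hy | hy
  · simp [invGammaKernel_of_nonpos s b hy]
  · rw [norm_mul, Complex.norm_exp, re_mul_ofReal, neg_re]
    exact mul_le_of_le_one_left (norm_nonneg _) (Real.exp_le_one_iff.mpr (by nlinarith))

theorem differentiableAt_invGammaLaplace (hs : 0 < s.re) (hb : 0 < b) {a : ℂ} (ha : 0 < a.re) :
    DifferentiableAt ℂ (invGammaLaplace s b) a := by
  have := continuous_invGammaKernel s hb
  exact differentiableAt_integral_of_dominated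
    ((isOpen_lt continuous_const continuous_re).mem_nhds ha)
    (fun w _ => Continuous.aestronglyMeasurable (by fun_prop))
    (.of_forall fun y => Differentiable.differentiableOn (by fun_prop))
    (integrable_invGammaKernel hs hb).norm
    (.of_forall fun y w hw => norm_invGammaLaplace_integrand_le s b (le_of_lt hw) y)

theorem continuousOn_invGammaLaplace (hs : 0 < s.re) (hb : 0 < b) :
    ContinuousOn (invGammaLaplace s b) {a | 0 ≤ a.re} := by
  have := continuous_invGammaKernel s hb
  exact continuousOn_of_dominated
    (fun w _ => Continuous.aestronglyMeasurable (by fun_prop))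
    (fun w hw => .of_forall (norm_invGammaLaplace_integrand_le s b hw))
    (integrable_invGammaKernel hs hb).norm
    (.of_forall fun y => Continuous.continuousOn (by fun_prop))

theorem fourier_invGammaKernel (s : ℂ) (b w : ℝ) :
    FourierTransform.fourier (invGammaKernel s b) w = invGammaLaplace s b (2 * π * I * w) := by
  rw [Real.fourier_real_eq_integral_exp_smul, invGammaLaplace]
  congr with y
  rw [smul_eq_mul]
  push_cast
  ring_nf

theorem integral_Ioi_eq_integral_comp_mul_exp {E : Type*} [NormedAddCommGroup E] [NormedSpace ℝ E]
    (g : ℝ → E) {q : ℝ} (hq : 0 < q) :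
    ∫ y in Set.Ioi 0, g y = ∫ x : ℝ, (q * Real.exp x) • g (q * Real.exp x) := by
  have himage : (fun x => q * Real.exp x) '' Set.univ = Set.Ioi 0 := by
    ext y
    refine ⟨?_, fun hy => ⟨Real.log (y / q), trivial, ?_⟩⟩
    · rintro ⟨x, -, rfl⟩
      exact mul_pos hq (Real.exp_pos x)
    · simp only [Real.exp_log (div_pos hy hq)]
      field_simp
  rw [← himage, integral_image_eq_integral_abs_deriv_smul MeasurableSet.univ
    (fun x _ => ((Real.hasDerivAt_exp x).const_mul q).hasDerivWithinAt)
    (fun x _ y _ hxy => Real.exp_injective (mul_left_cancel₀ hq.ne' hxy)), setIntegral_univ]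
  congr with x
  rw [abs_of_pos (by positivity)]

theorem mul_sqrt_div_mul_exp_add_div {a b : ℝ} (ha : 0 < a) (hb : 0 < b) (x : ℝ) :
    a * (√(b / a) * Real.exp x) + b / (√(b / a) * Real.exp x) = 2 * √(a * b) * Real.cosh x := by
  obtain ⟨α, hα, rfl⟩ : ∃ α, 0 < α ∧ a = α ^ 2 := ⟨√a, by positivity, (Real.sq_sqrt ha.le).symm⟩
  obtain ⟨β, hβ, rfl⟩ : ∃ β, 0 < β ∧ b = β ^ 2 := ⟨√b, by positivity, (Real.sq_sqrt hb.le).symm⟩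
  rw [← div_pow, ← mul_pow, Real.sqrt_sq (by positivity), Real.sqrt_sq (by positivity),
    Real.cosh_eq, Real.exp_neg]
  field_simp

/-- The substitution `y = √(b / a) * exp x` symmetrises the exponent `a * y + b / y`. -/
theorem invGammaLaplace_ofReal (s : ℂ) {a b : ℝ} (ha : 0 < a) (hb : 0 < b) :
    invGammaLaplace s b a = 2 * ((a / b : ℝ) : ℂ) ^ (s / 2) * Kbes s (2 * √(a * b) : ℝ) := by
  have hq : 0 < √(b / a) := by positivity
  rw [mul_right_comm, ← integral_exp_mul_exp_neg_cosh s (by positivity), mul_comm,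
    ← integral_const_mul, invGammaLaplace, ← setIntegral_eq_integral_of_forall_compl_eq_zero
      (s := Set.Ioi 0) fun y hy => by rw [invGammaKernel_of_nonpos s b (not_lt.mp hy), mul_zero],
    integral_Ioi_eq_integral_comp_mul_exp _ hq]
  congr with x
  have hy : 0 < √(b / a) * Real.exp x := by positivity
  have hcosh := mul_sqrt_div_mul_exp_add_div ha hb x
  have hlog : Real.log (√(b / a) * Real.exp x) = -Real.log (a / b) / 2 + x := by
    rw [Real.log_mul hq.ne' (Real.exp_pos x).ne', Real.log_exp, Real.log_sqrt (by positivity),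
      ← Real.log_inv, inv_div]
  generalize √(b / a) * Real.exp x = y at hy hcosh hlog ⊢
  have hy0 : (y : ℂ) ≠ 0 := ofReal_ne_zero.mpr hy.ne'
  have hpow : (y : ℂ) * (y : ℂ) ^ (-s - 1) = ((a / b : ℝ) : ℂ) ^ (s / 2) * cexp (-s * x) := by
    rw [cpow_sub _ _ hy0, cpow_one, mul_div_cancel₀ _ hy0, cpow_def_of_ne_zero hy0,
      cpow_def_of_ne_zero (ofReal_ne_zero.mpr (by positivity)), ← Complex.exp_add,
      ← ofReal_log hy.le, ← ofReal_log (by positivity), hlog]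
    push_cast
    ring_nf
  rw [invGammaKernel_of_pos s b hy, real_smul, ← mul_assoc (_ ^ _), ← hpow, mul_left_comm (cexp _),
    ← Complex.exp_add, ← mul_assoc]
  congr 2
  rw [neg_mul, neg_mul, ← ofReal_mul (2 * _), ← hcosh]
  push_cast
  ring

end InverseGamma

section KoshliakovKernel

/-- The closed form of `invGammaLaplace`, defined for `a` outside the negative real axis. -/
noncomputable def besselLaplace (s : ℂ) (b : ℝ) (a : ℂ) : ℂ :=
  2 * (a / b) ^ (s / 2) * Kbes s (2 * (a * b) ^ (1 / 2 : ℂ))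

theorem re_cpow_half_pos {z : ℂ} (hz : z ∈ slitPlane) : 0 < (z ^ (1 / 2 : ℂ)).re := by
  obtain ⟨harg, hz0⟩ := mem_slitPlane_iff_arg.mp hz
  have him : (Complex.log z * (1 / 2)).im = z.arg / 2 := by
    rw [one_div, ← div_eq_mul_inv, div_ofNat_im, log_im]
  rw [cpow_def_of_ne_zero hz0, Complex.exp_re, him]
  refine mul_pos (Real.exp_pos _) (Real.cos_pos_of_mem_Ioo ⟨?_, ?_⟩)
  · linarith [neg_pi_lt_arg z]
  · linarith [lt_of_le_of_ne (arg_le_pi z) harg]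

theorem mul_ofReal_mem_slitPlane {a : ℂ} (ha : a ∈ slitPlane) {r : ℝ} (hr : 0 < r) :
    a * r ∈ slitPlane := by
  rw [mem_slitPlane_iff, re_mul_ofReal, im_mul_ofReal]
  exact ha.imp (mul_pos · hr) (mul_ne_zero · hr.ne')

theorem differentiableAt_besselLaplace (s : ℂ) {b : ℝ} (hb : 0 < b) {a : ℂ} (ha : a ∈ slitPlane) :
    DifferentiableAt ℂ (besselLaplace s b) a := by
  have hdiv : a / b ∈ slitPlane := by
    simpa [div_eq_mul_inv] using mul_ofReal_mem_slitPlane ha (inv_pos.mpr hb)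
  have hmul := mul_ofReal_mem_slitPlane ha hb
  have hK : DifferentiableAt ℂ (Kbes s) (2 * (a * b) ^ (1 / 2 : ℂ)) :=
    differentiableAt_Kbes s (by simpa using re_cpow_half_pos hmul)
  have harg : DifferentiableAt ℂ (fun a : ℂ => 2 * (a * b) ^ (1 / 2 : ℂ)) a :=
    ((differentiableAt_id.mul_const _).cpow_const hmul).const_mul 2
  have hcpow : DifferentiableAt ℂ (fun a : ℂ => 2 * (a / b) ^ (s / 2)) a :=
    ((differentiableAt_id.div_const _).cpow_const hdiv).const_mul 2
  exact hcpow.mul (DifferentiableAt.comp (g := Kbes s) a hK harg)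

theorem besselLaplace_ofReal (s : ℂ) {a b : ℝ} (ha : 0 < a) (hb : 0 < b) :
    besselLaplace s b a = 2 * ((a / b : ℝ) : ℂ) ^ (s / 2) * Kbes s (2 * √(a * b) : ℝ) := by
  have hsqrt : ((√(a * b) : ℝ) : ℂ) = ((a : ℂ) * b) ^ (1 / 2 : ℂ) := by
    rw [Real.sqrt_eq_rpow, ofReal_cpow (by positivity)]
    push_cast
    rfl
  rw [besselLaplace, ofReal_mul, hsqrt, ofReal_div, ofReal_ofNat]

theorem invGammaLaplace_eqOn_halfPlane {s : ℂ} {b : ℝ} (hs : 0 < s.re) (hb : 0 < b) :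
    Set.EqOn (invGammaLaplace s b) (besselLaplace s b) {a | 0 < a.re} := by
  have hopen : IsOpen {a : ℂ | 0 < a.re} := isOpen_lt continuous_const continuous_re
  have hf : AnalyticOnNhd ℂ (invGammaLaplace s b) {a | 0 < a.re} :=
    DifferentiableOn.analyticOnNhd
      (fun a ha => (differentiableAt_invGammaLaplace hs hb ha).differentiableWithinAt) hopen
  have hg : AnalyticOnNhd ℂ (besselLaplace s b) {a | 0 < a.re} :=
    DifferentiableOn.analyticOnNhd
      (fun a ha => (differentiableAt_besselLaplace s hb (Or.inl ha)).differentiableWithinAt) hopen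
  have hreal : ∀ᶠ r : ℝ in 𝓝[≠] 1, invGammaLaplace s b r = besselLaplace s b r := by
    filter_upwards [nhdsWithin_le_nhds (lt_mem_nhds one_pos)] with r hr
    rw [invGammaLaplace_ofReal s hr hb, besselLaplace_ofReal s hr hb]
  have htendsto : Tendsto ofReal (𝓝[≠] 1) (𝓝[≠] 1) := by
    simpa using continuous_ofReal.continuousWithinAt.tendsto_nhdsWithin (s := {(1 : ℝ)}ᶜ)
      (t := {(1 : ℂ)}ᶜ) (x := 1) fun r hr => by simpa using hr
  exact hf.eqOn_of_preconnected_of_frequently_eq hg (convex_halfSpace_re_gt 0).isPreconnected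
    (by simp : (1 : ℂ) ∈ {a | 0 < a.re}) (htendsto.frequently hreal.frequently)

theorem invGammaLaplace_eq_besselLaplace {s : ℂ} {b : ℝ} (hs : 0 < s.re) (hb : 0 < b) {a : ℂ}
    (ha : 0 ≤ a.re) (ha0 : a ≠ 0) : invGammaLaplace s b a = besselLaplace s b a := by
  have hslit : {a : ℂ | 0 ≤ a.re} \ {0} ⊆ slitPlane := fun a ⟨ha, ha0⟩ => by
    exact (lt_or_eq_of_le ha).imp id fun hre him => ha0 (Complex.ext hre.symm him)
  refine (invGammaLaplace_eqOn_halfPlane hs hb).of_subset_closure (t := {a | 0 ≤ a.re} \ {0})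
    ((continuousOn_invGammaLaplace hs hb).mono Set.sdiff_subset)
    (fun a ha =>
      (differentiableAt_besselLaplace s hb (hslit ha)).continuousAt.continuousWithinAt)
    (fun a (ha : 0 < a.re) => ⟨le_of_lt ha, by rintro rfl; simp at ha⟩) ?_
    (show a ∈ {a : ℂ | 0 ≤ a.re} \ {0} from ⟨ha, ha0⟩)
  rw [closure_setOfPred_lt_re]
  exact Set.sdiff_subset

/-- The Bessel function along the ray of argument `θ / 4`, with the matching phase. -/
noncomputable def rotatedKbes (θ : ℝ) (s : ℂ) (r : ℝ) : ℂ :=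
  cexp (θ * I * s / 4) * Kbes s (4 * π * cexp (θ * I / 4) * (√r : ℝ))

/-- The summand of Koshliakov's series `phiK` without its coefficient. -/
noncomputable def koshliakovKernel (s : ℂ) (r : ℝ) : ℂ := rotatedKbes π s r + rotatedKbes (-π) s r

/-- The rate of decay of `koshliakovKernel s r` in terms of `√r`. -/
noncomputable def koshliakovRate : ℝ := 4 * π * Real.cos (π / 4)

theorem koshliakovRate_pos : 0 < koshliakovRate := by
  rw [koshliakovRate, Real.cos_pi_div_four]
  positivity

theorem koshliakovRate_mul_sqrt_le_re {θ : ℝ} (hθ : |θ| ≤ π) (r : ℝ) :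
    koshliakovRate * √r ≤ (4 * π * cexp (θ * I / 4) * (√r : ℝ) : ℂ).re := by
  have hcos : Real.cos (π / 4) ≤ Real.cos (θ / 4) := by
    rw [← Real.cos_abs (θ / 4), abs_div, abs_of_pos (by positivity : (0 : ℝ) < 4)]
    exact Real.cos_le_cos_of_nonneg_of_le_pi (by positivity) (by linarith [Real.pi_pos])
      (by linarith)
  have hre : (4 * π * cexp (θ * I / 4) * (√r : ℝ) : ℂ).re = 4 * π * Real.cos (θ / 4) * √r := by
    rw [re_mul_ofReal, show (4 * π * cexp (θ * I / 4) : ℂ) =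
      ((4 * π : ℝ) : ℂ) * cexp ((θ / 4 : ℝ) * I) by push_cast; ring_nf, re_ofReal_mul,
      exp_ofReal_mul_I_re]
  rw [hre, koshliakovRate]
  gcongr

theorem norm_cexp_mul_I_mul_div_four_le {θ : ℝ} (hθ : |θ| ≤ π) (s : ℂ) :
    ‖cexp (θ * I * s / 4)‖ ≤ Real.exp ‖s‖ := by
  refine (norm_exp_le_exp_norm _).trans (Real.exp_le_exp.mpr ?_)
  rw [norm_div, norm_mul, norm_mul, norm_I, Complex.norm_real, Real.norm_eq_abs,
    Complex.norm_ofNat, mul_one, div_le_iff₀ four_pos, mul_comm ‖s‖]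
  gcongr
  linarith [Real.pi_le_four]

theorem exists_norm_rotatedKbes_le (R : ℝ) {r₀ : ℝ} (hr₀ : 0 < r₀) :
    ∃ C, 0 ≤ C ∧ ∀ θ s r, |θ| ≤ π → ‖s‖ ≤ R → r₀ ≤ r →
      ‖rotatedKbes θ s r‖ ≤ C * Real.exp (-koshliakovRate * √r) := by
  set c := koshliakovRate * √r₀
  have hc : 0 < c := mul_pos koshliakovRate_pos (Real.sqrt_pos.mpr hr₀)
  refine ⟨Real.exp R * Real.exp ((R + 1) ^ 2 / c + c), by positivity, fun θ s r hθ hs hr => ?_⟩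
  have hre := koshliakovRate_mul_sqrt_le_re hθ r
  have hcr : c ≤ koshliakovRate * √r := by have := koshliakovRate_pos; simp only [c]; gcongr
  rw [rotatedKbes, norm_mul, mul_assoc (Real.exp R), ← Real.exp_add ((R + 1) ^ 2 / c + c)]
  refine mul_le_mul ((norm_cexp_mul_I_mul_div_four_le hθ s).trans (Real.exp_le_exp.mpr hs))
    ((norm_Kbes_le hc (hcr.trans hre) ((abs_re_le_norm s).trans hs)).trans
      (Real.exp_le_exp.mpr ?_)) (norm_nonneg _) (Real.exp_pos _).le
  linarith

theorem exists_norm_koshliakovKernel_le (R : ℝ) {r₀ : ℝ} (hr₀ : 0 < r₀) :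
    ∃ C, 0 ≤ C ∧ ∀ s r, ‖s‖ ≤ R → r₀ ≤ r →
      ‖koshliakovKernel s r‖ ≤ C * Real.exp (-koshliakovRate * √r) := by
  obtain ⟨C, hC0, hC⟩ := exists_norm_rotatedKbes_le R hr₀
  have hpi : |π| ≤ π := (abs_of_pos Real.pi_pos).le
  refine ⟨C + C, by positivity, fun s r hs hr => (norm_add_le _ _).trans ?_⟩
  rw [add_mul]
  exact add_le_add (hC π s r hpi hs hr) (hC (-π) s r (by rwa [abs_neg]) hs hr)

theorem differentiable_rotatedKbes {θ r : ℝ} (hθ : |θ| ≤ π) (hr : 0 < r) :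
    Differentiable ℂ fun s => rotatedKbes θ s r := by
  have hre := (mul_pos koshliakovRate_pos (Real.sqrt_pos.mpr hr)).trans_le
    (koshliakovRate_mul_sqrt_le_re hθ r)
  have := differentiable_Kbes_order hre
  unfold rotatedKbes
  fun_prop

theorem differentiable_koshliakovKernel {r : ℝ} (hr : 0 < r) :
    Differentiable ℂ fun s => koshliakovKernel s r := by
  have hpi : |π| ≤ π := (abs_of_pos Real.pi_pos).le
  exact (differentiable_rotatedKbes hpi hr).add (differentiable_rotatedKbes (by rwa [abs_neg]) hr)

theorem log_exp_mul_I_div_two {θ : ℝ} (hθ : |θ| ≤ π) :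
    Complex.log (cexp (θ * I / 2)) = θ * I / 2 := by
  have him : (θ * I / 2 : ℂ).im = θ / 2 := by simp
  obtain ⟨hlo, hhi⟩ := abs_le.mp hθ
  exact Complex.log_exp (by rw [him]; linarith [Real.pi_pos]) (by rw [him]; linarith [Real.pi_pos])

theorem ofReal_mul_cpow_of_ne_zero {r : ℝ} (hr : 0 < r) {z : ℂ} (hz : z ≠ 0) (w : ℂ) :
    ((r : ℂ) * z) ^ w = (r : ℂ) ^ w * cexp (Complex.log z * w) := by
  have hr0 : (r : ℂ) ≠ 0 := ofReal_ne_zero.mpr hr.ne'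
  rw [cpow_def_of_ne_zero (mul_ne_zero hr0 hz), log_ofReal_mul hr hz, cpow_def_of_ne_zero hr0,
    ← Complex.exp_add, ofReal_log hr.le, add_mul]

theorem besselLaplace_eq_rotatedKbes (s : ℂ) {θ u d : ℝ} (hθ : |θ| ≤ π) (hu : 0 < u) (hd : 0 < d) :
    besselLaplace s (2 * π * u) (2 * π * cexp (θ * I / 2) * d) =
      2 * ((d / u : ℝ) : ℂ) ^ (s / 2) * rotatedKbes θ s (d * u) := by
  have hJ := Complex.exp_ne_zero (θ * I / 2)
  have hpi : (π : ℂ) ≠ 0 := ofReal_ne_zero.mpr Real.pi_ne_zero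
  have hu0 : (u : ℂ) ≠ 0 := ofReal_ne_zero.mpr hu.ne'
  have hdiv : (2 * π * cexp (θ * I / 2) * d : ℂ) / (2 * π * u : ℝ) =
      (d / u : ℝ) * cexp (θ * I / 2) := by
    push_cast
    field_simp
  have hmul : (2 * π * cexp (θ * I / 2) * d : ℂ) * (2 * π * u : ℝ) =
      ((2 * π) ^ 2 * (d * u) : ℝ) * cexp (θ * I / 2) := by
    push_cast
    ring
  have hsqrt : (((2 * π) ^ 2 * (d * u) : ℝ) : ℂ) ^ (1 / 2 : ℂ) = (2 * π * √(d * u) : ℝ) := by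
    rw [show (1 / 2 : ℂ) = ((1 / 2 : ℝ) : ℂ) by simp, ← ofReal_cpow (by positivity),
      ← Real.sqrt_eq_rpow, Real.sqrt_mul (by positivity), Real.sqrt_sq (by positivity)]
  rw [besselLaplace, hdiv, hmul, ofReal_mul_cpow_of_ne_zero (by positivity) hJ,
    ofReal_mul_cpow_of_ne_zero (by positivity) hJ, hsqrt, log_exp_mul_I_div_two hθ, rotatedKbes]
  push_cast
  ring_nf

end KoshliakovKernel

section ShiftedSeries

theorem summable_nat_add_one_rpow {a : ℝ} (ha : a < -1) :
    Summable fun n : ℕ => ((n : ℝ) + 1) ^ a := by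
  simpa using (summable_nat_add_iff 1).mpr (Real.summable_nat_rpow.mpr ha)

theorem norm_natCast_add_one_cpow (n : ℕ) (z : ℂ) :
    ‖((n : ℂ) + 1) ^ z‖ = ((n : ℝ) + 1) ^ z.re := by
  exact_mod_cast norm_natCast_cpow_of_pos n.succ_pos z

theorem hasSum_natCast_add_one_cpow_neg {s : ℂ} (hs : 1 < s.re) :
    HasSum (fun n : ℕ => ((n : ℂ) + 1) ^ (-s)) (riemannZeta s) := by
  have hsummable : Summable fun n : ℕ => ((n : ℂ) + 1) ^ (-s) :=
    .of_norm (by simpa only [norm_natCast_add_one_cpow, neg_re] using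
      summable_nat_add_one_rpow (neg_lt_neg hs))
  simpa only [zeta_eq_tsum_one_div_nat_add_one_cpow hs, one_div, ← cpow_neg] using hsummable.hasSum

theorem summable_rpow_mul_exp_neg_mul_sqrt (A : ℝ) {c : ℝ} (hc : 0 < c) :
    Summable fun n : ℕ => ((n : ℝ) + 1) ^ A * Real.exp (-c * √((n : ℝ) + 1)) := by
  have hsqrt : Tendsto (fun n : ℕ => √((n : ℝ) + 1)) atTop atTop :=
    Real.tendsto_sqrt_atTop.comp
      (tendsto_atTop_add_const_right _ _ tendsto_natCast_atTop_atTop)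
  have hbdd := ((tendsto_rpow_mul_exp_neg_mul_atTop_nhds_zero (2 * A + 4) c hc).comp
    hsqrt).isBigO_one ℝ
  refine summable_of_isBigO_nat (summable_nat_add_one_rpow (by norm_num : (-2 : ℝ) < -1))
    ((hbdd.mul (Asymptotics.isBigO_refl (fun n : ℕ => ((n : ℝ) + 1) ^ (-2 : ℝ)) atTop)).congr
      (fun n => ?_) fun n => one_mul _)
  have hn : (0 : ℝ) < n + 1 := n.cast_add_one_pos
  rw [Function.comp_apply, Real.sqrt_eq_rpow, ← Real.rpow_mul hn.le, mul_right_comm,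
    ← Real.rpow_add hn]
  ring_nf

end ShiftedSeries

section PoissonSummation

theorem invGammaKernel_isBigO_cocompact (s : ℂ) {b : ℝ} (hb : 0 < b) :
    invGammaKernel s b =O[cocompact ℝ] fun y => |y| ^ (-(s.re + 1)) := by
  refine Asymptotics.IsBigO.of_bound 1 (Eventually.of_forall fun y => ?_)
  rw [one_mul, Real.norm_of_nonneg (by positivity)]
  rcases le_or_gt y 0 with hy | hy
  · rw [invGammaKernel_of_nonpos s b hy, norm_zero]
    positivity
  · rw [abs_of_pos hy, neg_add']
    exact norm_invGammaKernel_le s hb hy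

theorem fourier_invGammaKernel_zero {s : ℂ} {b : ℝ} (hs : 0 < s.re) (hb : 0 < b) :
    FourierTransform.fourier (invGammaKernel s b) 0 = Gamma s * (b : ℂ) ^ (-s) := by
  rw [← integral_invGammaKernel hs hb, Real.fourier_real_eq_integral_exp_smul]
  simp

theorem fourier_invGammaKernel_of_pos {s : ℂ} (hs : 0 < s.re) {u d : ℝ} (hu : 0 < u) (hd : 0 < d) :
    FourierTransform.fourier (invGammaKernel s (2 * π * u)) d =
      2 * ((d / u : ℝ) : ℂ) ^ (s / 2) * rotatedKbes π s (d * u) := by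
  have hpi : |π| ≤ π := (abs_of_pos Real.pi_pos).le
  rw [fourier_invGammaKernel, invGammaLaplace_eq_besselLaplace hs (by positivity) (by simp)
    (by simp [Real.pi_ne_zero, hd.ne']), ← besselLaplace_eq_rotatedKbes s hpi hu hd,
    mul_div_right_comm, exp_pi_div_two_mul_I]

theorem fourier_invGammaKernel_neg_of_pos {s : ℂ} (hs : 0 < s.re) {u d : ℝ} (hu : 0 < u)
    (hd : 0 < d) :
    FourierTransform.fourier (invGammaKernel s (2 * π * u)) (-d) =
      2 * ((d / u : ℝ) : ℂ) ^ (s / 2) * rotatedKbes (-π) s (d * u) := by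
  have hpi : |(-π)| ≤ π := by rw [abs_neg, abs_of_pos Real.pi_pos]
  have hexp : cexp ((-π : ℝ) * I / 2) = -I := by
    rw [mul_div_right_comm, ofReal_neg, exp_neg_pi_div_two_mul_I]
  rw [fourier_invGammaKernel, invGammaLaplace_eq_besselLaplace hs (by positivity) (by simp)
    (by simp [Real.pi_ne_zero, hd.ne']), ← besselLaplace_eq_rotatedKbes s hpi hu hd, hexp]
  push_cast
  ring_nf

theorem summable_mul_rotatedKbes {θ u : ℝ} (hθ : |θ| ≤ π) (s : ℂ) (hu : 0 < u) :
    Summable fun d : ℕ =>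
      2 * (((d + 1) / u : ℝ) : ℂ) ^ (s / 2) * rotatedKbes θ s ((d + 1) * u) := by
  obtain ⟨C, -, hC⟩ := exists_norm_rotatedKbes_le ‖s‖ hu
  have hsum := summable_rpow_mul_exp_neg_mul_sqrt (s.re / 2)
    (mul_pos koshliakovRate_pos (Real.sqrt_pos.mpr hu))
  refine Summable.of_norm_bounded (hsum.mul_left (2 * u⁻¹ ^ (s.re / 2) * C)) fun d => ?_
  have hd : (0 : ℝ) < d + 1 := d.cast_add_one_pos
  have hle : u ≤ (d + 1) * u := le_mul_of_one_le_left hu.le (by simp)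
  rw [norm_mul, norm_mul, norm_cpow_eq_rpow_re_of_pos (by positivity), div_ofNat_re,
    div_eq_mul_inv ((d : ℝ) + 1), Real.mul_rpow hd.le (by positivity), Complex.norm_ofNat]
  calc 2 * (((d : ℝ) + 1) ^ (s.re / 2) * u⁻¹ ^ (s.re / 2)) * ‖rotatedKbes θ s ((d + 1) * u)‖
      ≤ 2 * (((d : ℝ) + 1) ^ (s.re / 2) * u⁻¹ ^ (s.re / 2)) *
          (C * Real.exp (-koshliakovRate * √((d + 1) * u))) := by
        gcongr
        exact hC θ s _ hθ le_rfl hle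
    _ = _ := by
        rw [Real.sqrt_mul hd.le]
        ring_nf

theorem tsum_invGammaKernel_eq_tsum_fourier {s : ℂ} {b : ℝ} (hs : 0 < s.re) (hb : 0 < b)
    (hF : Summable fun n : ℤ => FourierTransform.fourier (invGammaKernel s b) n) :
    ∑' k : ℕ, invGammaKernel s b (k + 1) =
      ∑' n : ℤ, FourierTransform.fourier (invGammaKernel s b) n := by
  have hpos : Summable fun k : ℕ => invGammaKernel s b ((k + 1 : ℤ) : ℝ) :=
    .of_norm_bounded (summable_nat_add_one_rpow (by linarith : -s.re - 1 < -1)) fun k => by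
      simpa using norm_invGammaKernel_le s hb k.cast_add_one_pos
  have hzero (k : ℕ) : invGammaKernel s b ((-(k + 1) : ℤ) : ℝ) = 0 :=
    invGammaKernel_of_nonpos s b (by push_cast; linarith [(k.cast_nonneg : (0 : ℝ) ≤ k)])
  have hneg : Summable fun k : ℕ => invGammaKernel s b ((-(k + 1) : ℤ) : ℝ) := by
    simpa only [hzero] using summable_zero
  have hpoisson := Real.tsum_eq_tsum_fourier_of_rpow_decay_of_summable
    (continuous_invGammaKernel s hb) (by linarith : 1 < s.re + 1)
    (invGammaKernel_isBigO_cocompact s hb) hF 0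
  rw [tsum_of_add_one_of_neg_add_one (f := fun n : ℤ => invGammaKernel s b (0 + n))
    (by simpa using hpos) (by simpa using hneg)] at hpoisson
  have hzero' (k : ℕ) : invGammaKernel s b (-1 + -(k : ℝ)) = 0 := by simpa [add_comm] using hzero k
  simpa [hzero', invGammaKernel_of_nonpos s b le_rfl] using hpoisson

theorem tsum_cpow_mul_exp_neg_div {s : ℂ} (hs : 0 < s.re) {u : ℝ} (hu : 0 < u) :
    ∑' k : ℕ, ((k : ℂ) + 1) ^ (-s - 1) * cexp (-(2 * π * u : ℝ) / ((k : ℂ) + 1)) =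
      Gamma s * ((2 * π * u : ℝ) : ℂ) ^ (-s) +
        ∑' d : ℕ, 2 * (((d + 1) / u : ℝ) : ℂ) ^ (s / 2) * koshliakovKernel s ((d + 1) * u) := by
  have hb : 0 < 2 * π * u := by positivity
  have hpi : |π| ≤ π := (abs_of_pos Real.pi_pos).le
  have hpos (d : ℕ) := fourier_invGammaKernel_of_pos hs hu (d.cast_add_one_pos (α := ℝ))
  have hneg (d : ℕ) := fourier_invGammaKernel_neg_of_pos hs hu (d.cast_add_one_pos (α := ℝ))
  have hsumPos := summable_mul_rotatedKbes hpi s hu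
  have hsumNeg := summable_mul_rotatedKbes (by rwa [abs_neg] : |(-π)| ≤ π) s hu
  have hFPos : Summable fun d : ℕ =>
      FourierTransform.fourier (invGammaKernel s (2 * π * u)) ((d + 1 : ℤ) : ℝ) := by
    simpa [hpos] using hsumPos
  have hFNeg : Summable fun d : ℕ =>
      FourierTransform.fourier (invGammaKernel s (2 * π * u)) ((-(d + 1) : ℤ) : ℝ) := by
    simpa only [Int.cast_neg, Int.cast_add, Int.cast_natCast, Int.cast_one, hneg] using hsumNeg
  have hF : Summable fun n : ℤ => FourierTransform.fourier (invGammaKernel s (2 * π * u)) n :=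
    hFPos.of_add_one_of_neg_add_one
      (f := fun n : ℤ => FourierTransform.fourier (invGammaKernel s (2 * π * u)) n) hFNeg
  have hkernel (k : ℕ) : invGammaKernel s (2 * π * u) (k + 1) =
      ((k : ℂ) + 1) ^ (-s - 1) * cexp (-(2 * π * u : ℝ) / ((k : ℂ) + 1)) := by
    rw [invGammaKernel_of_pos s _ k.cast_add_one_pos]
    push_cast
    rfl
  simp only [← hkernel]
  rw [tsum_invGammaKernel_eq_tsum_fourier hs hb hF, tsum_of_add_one_of_neg_add_one
    (f := fun n : ℤ => FourierTransform.fourier (invGammaKernel s (2 * π * u)) n) hFPos hFNeg]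
  simp only [Int.cast_neg, Int.cast_add, Int.cast_natCast, Int.cast_one, Int.cast_zero, hpos, hneg,
    fourier_invGammaKernel_zero hs hb, koshliakovKernel, mul_add]
  rw [hsumPos.tsum_add hsumNeg]
  ring

end PoissonSummation

section DivisorSum

theorem hasSum_sum_divisors {E : Type*} [AddCommMonoid E] [TopologicalSpace E] [ContinuousAdd E]
    [RegularSpace E] {F : ℕ → ℕ → E} {a : E}
    (h : HasSum (fun p : ℕ × ℕ => F (p.1 + 1) (p.2 + 1)) a) :
    HasSum (fun n : ℕ => ∑ d ∈ (n + 1).divisors, F d ((n + 1) / d)) a := by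
  have hpnat : HasSum (fun p : ℕ+ × ℕ+ => F p.1 p.2) a := by
    rw [← (Equiv.prodCongr Equiv.pnatEquivNat.symm Equiv.pnatEquivNat.symm).hasSum_iff]
    exact h
  have hfiber (n : ℕ+) : HasSum (fun c : (n : ℕ).divisorsAntidiagonal => F c.1.1 c.1.2)
      (∑ d ∈ (n : ℕ).divisors, F d (n / d)) := by
    rw [← Nat.sum_divisorsAntidiagonal F, ← Finset.sum_attach, ← univ_eq_attach]
    exact hasSum_fintype _
  have hsigma := (sigmaAntidiagonalEquivProd.hasSum_iff.mpr hpnat).sigma hfiber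
  have hnat := Equiv.pnatEquivNat.symm.hasSum_iff.mpr hsigma
  exact hnat

theorem hasSum_csigma_mul {s : ℂ} {g : ℕ → ℂ} {a : ℂ}
    (h : HasSum (fun p : ℕ × ℕ => ((p.1 : ℂ) + 1) ^ s * g ((p.1 + 1) * (p.2 + 1))) a) :
    HasSum (fun n : ℕ => csigma s (n + 1) * g (n + 1)) a := by
  convert! hasSum_sum_divisors (F := fun d m => (d : ℂ) ^ s * g (d * m))
    (by simpa only [Nat.cast_add_one] using h) using 2 with n
  rw [csigma, sum_mul]
  refine sum_congr rfl fun d hd => ?_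
  rw [Nat.mul_div_cancel' (Nat.dvd_of_mem_divisors hd)]

theorem summable_norm_csigma_mul {s : ℂ} {g : ℕ → ℝ} (hg : ∀ n, 0 ≤ g n)
    (h : Summable fun p : ℕ × ℕ => ((p.1 : ℝ) + 1) ^ s.re * g ((p.1 + 1) * (p.2 + 1))) :
    Summable fun n : ℕ => ‖csigma s (n + 1)‖ * g (n + 1) := by
  have hsum := (hasSum_sum_divisors (F := fun d m => (d : ℝ) ^ s.re * g (d * m))
    (by simpa only [Nat.cast_add_one] using h.hasSum)).summable
  refine hsum.of_nonneg_of_le (fun n => mul_nonneg (norm_nonneg _) (hg _)) fun n => ?_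
  calc ‖csigma s (n + 1)‖ * g (n + 1)
      ≤ (∑ d ∈ (n + 1).divisors, ‖(d : ℂ) ^ s‖) * g (n + 1) := by
        gcongr
        · exact hg _
        · exact norm_sum_le _ _
    _ = ∑ d ∈ (n + 1).divisors, (d : ℝ) ^ s.re * g (d * ((n + 1) / d)) := by
        rw [sum_mul]
        refine sum_congr rfl fun d hd => ?_
        rw [Nat.mul_div_cancel' (Nat.dvd_of_mem_divisors hd),
          norm_natCast_cpow_of_pos (Nat.pos_of_mem_divisors hd)]

end DivisorSum

section KoshliakovSeries

/-- The summand of the double series obtained from `phiK` by writing `n = (p.1 + 1) * (p.2 + 1)`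
with divisor `p.1 + 1`. -/
noncomputable def koshliakovPair (s : ℂ) (t : ℝ) (p : ℕ × ℕ) : ℂ :=
  ((p.1 : ℂ) + 1) ^ (-s / 2) * ((p.2 : ℂ) + 1) ^ (s / 2) *
    koshliakovKernel s ((p.1 + 1) * (p.2 + 1) * t)

theorem half_sqrt_add_quarter_sqrt_le_sqrt_mul {a b t t₀ : ℝ} (ha : 1 ≤ a) (hb : 1 ≤ b)
    (ht₀ : t₀ ≤ t) : √t / 2 + √t₀ / 4 * (√a + √b) ≤ √(a * b * t) := by
  have ha' : 1 ≤ √a := Real.one_le_sqrt.mpr ha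
  have hb' : 1 ≤ √b := Real.one_le_sqrt.mpr hb
  have hab : (√a + √b) / 2 ≤ √a * √b := by nlinarith
  have hab' : 1 ≤ √a * √b := one_le_mul_of_one_le_of_one_le ha' hb'
  rw [Real.sqrt_mul (by positivity), Real.sqrt_mul (by positivity)]
  calc √t / 2 + √t₀ / 4 * (√a + √b) = 1 * √t / 2 + (√a + √b) / 2 * √t₀ / 2 := by ring
    _ ≤ √a * √b * √t / 2 + √a * √b * √t / 2 := by gcongr
    _ = √a * √b * √t := by ring

theorem natCast_add_one_rpow_le {a R : ℝ} (n : ℕ) (h : a ≤ R) :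
    ((n : ℝ) + 1) ^ a ≤ ((n : ℝ) + 1) ^ R :=
  Real.rpow_le_rpow_of_exponent_le (by simp) h

theorem exists_summable_norm_koshliakovPair_le (R : ℝ) {t₀ : ℝ} (ht₀ : 0 < t₀) :
    ∃ u : ℕ × ℕ → ℝ, Summable u ∧ ∀ s t p, ‖s‖ ≤ R → t₀ ≤ t →
      ‖koshliakovPair s t p‖ ≤ u p * Real.exp (-(koshliakovRate / 2) * √t) := by
  obtain ⟨C, hC0, hC⟩ := exists_norm_koshliakovKernel_le R ht₀
  have hrate := koshliakovRate_pos
  set c := koshliakovRate * √t₀ / 4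
  have hsum := summable_rpow_mul_exp_neg_mul_sqrt R (by positivity : 0 < c)
  refine ⟨_, (hsum.mul_of_nonneg hsum (fun n => by positivity) fun n => by positivity).mul_left C,
    fun s t p hs ht => ?_⟩
  have hone (n : ℕ) : (1 : ℝ) ≤ n + 1 := by simp
  have ht0 : 0 < t := ht₀.trans_le ht
  obtain ⟨hre, hre'⟩ := abs_le.mp ((abs_re_le_norm s).trans hs)
  have hexp : Real.exp (-koshliakovRate * √((p.1 + 1) * (p.2 + 1) * t)) ≤
      Real.exp (-c * √(p.1 + 1)) * Real.exp (-c * √(p.2 + 1)) *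
        Real.exp (-(koshliakovRate / 2) * √t) := by
    have hmul := mul_le_mul_of_nonneg_left
      (half_sqrt_add_quarter_sqrt_le_sqrt_mul (hone p.1) (hone p.2) ht) hrate.le
    rw [← Real.exp_add, ← Real.exp_add, Real.exp_le_exp]
    simp only [c]
    linarith
  have hkernel := hC s ((p.1 + 1) * (p.2 + 1) * t) hs (ht.trans
    (le_mul_of_one_le_left ht0.le (one_le_mul_of_one_le_of_one_le (hone _) (hone _))))
  have hd : ((p.1 : ℝ) + 1) ^ (-s / 2).re ≤ ((p.1 : ℝ) + 1) ^ R :=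
    natCast_add_one_rpow_le _ (by rw [div_ofNat_re, neg_re]; linarith)
  have hm : ((p.2 : ℝ) + 1) ^ (s / 2).re ≤ ((p.2 : ℝ) + 1) ^ R :=
    natCast_add_one_rpow_le _ (by rw [div_ofNat_re]; linarith)
  rw [koshliakovPair, norm_mul, norm_mul, norm_natCast_add_one_cpow, norm_natCast_add_one_cpow]
  calc _ ≤ ((p.1 : ℝ) + 1) ^ R * ((p.2 : ℝ) + 1) ^ R * (C * (Real.exp (-c * √(p.1 + 1)) *
        Real.exp (-c * √(p.2 + 1)) * Real.exp (-(koshliakovRate / 2) * √t))) := by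
        gcongr
        exact hkernel.trans (by gcongr)
    _ = _ := by ring

theorem summable_koshliakovPair (s : ℂ) {t : ℝ} (ht : 0 < t) : Summable (koshliakovPair s t) := by
  obtain ⟨u, hu, hle⟩ := exists_summable_norm_koshliakovPair_le ‖s‖ ht
  exact .of_norm_bounded (hu.mul_right _) fun p => hle s t p le_rfl le_rfl

theorem phiK_eq_tsum_koshliakovPair (s : ℂ) {t : ℝ} (ht : 0 < t) :
    phiK t s = 2 * ∑' p, koshliakovPair s t p := by
  set g : ℕ → ℂ := fun n => (n : ℂ) ^ (s / 2) * koshliakovKernel s (n * t) with hg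
  have hpair (p : ℕ × ℕ) : koshliakovPair s t p =
      ((p.1 : ℂ) + 1) ^ (-s) * g ((p.1 + 1) * (p.2 + 1)) := by
    simp only [hg, koshliakovPair]
    rw [Nat.cast_mul, Nat.cast_mul, natCast_mul_natCast_cpow, show -s / 2 = -s + s / 2 by ring,
      cpow_add _ _ p.1.cast_add_one_ne_zero]
    push_cast
    ring
  have hsum : HasSum (fun p : ℕ × ℕ => ((p.1 : ℂ) + 1) ^ (-s) * g ((p.1 + 1) * (p.2 + 1)))
      (∑' p, koshliakovPair s t p) := by
    rw [← funext hpair]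
    exact (summable_koshliakovPair s ht).hasSum
  rw [← (hasSum_csigma_mul hsum).tsum_eq, phiK]
  simp only [hg, koshliakovKernel, rotatedKbes, Nat.cast_add_one, ofReal_neg, mul_assoc]

theorem exists_norm_phiK_le (s : ℂ) {t₀ : ℝ} (ht₀ : 0 < t₀) :
    ∃ C, ∀ t, t₀ ≤ t → ‖phiK t s‖ ≤ C * Real.exp (-(koshliakovRate / 2) * √t) := by
  obtain ⟨u, hu, hle⟩ := exists_summable_norm_koshliakovPair_le ‖s‖ ht₀
  refine ⟨2 * ∑' p, u p, fun t ht => ?_⟩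
  rw [phiK_eq_tsum_koshliakovPair s (ht₀.trans_le ht), norm_mul, Complex.norm_ofNat, mul_assoc,
    ← tsum_mul_right]
  gcongr
  exact tsum_of_norm_bounded (hu.mul_right _).hasSum fun p => hle s t p le_rfl ht

theorem differentiable_phiK {t : ℝ} (ht : 0 < t) : Differentiable ℂ (phiK t) := by
  intro s
  obtain ⟨u, hu, hle⟩ := exists_summable_norm_koshliakovPair_le (‖s‖ + 1) ht
  have hterm (p : ℕ × ℕ) : Differentiable ℂ fun s => koshliakovPair s t p := by
    have hkernel := differentiable_koshliakovKernel (r := (p.1 + 1) * (p.2 + 1) * t) (by positivity)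
    have hd := p.1.cast_add_one_ne_zero (R := ℂ)
    have hm := p.2.cast_add_one_ne_zero (R := ℂ)
    unfold koshliakovPair
    exact ((Differentiable.const_cpow (by fun_prop) (.inl hd)).mul
      (Differentiable.const_cpow (by fun_prop) (.inl hm))).mul hkernel
  have hsum := differentiableOn_tsum_of_summable_norm (F := fun p s => koshliakovPair s t p)
    (hu.mul_right _) (fun p => (hterm p).differentiableOn) (Metric.isOpen_ball (x := 0))
    fun p w hw => hle w t p (mem_ball_zero_iff.mp hw).le le_rfl
  rw [show phiK t = fun s => 2 * ∑' p, koshliakovPair s t p from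
    funext fun s => phiK_eq_tsum_koshliakovPair s ht]
  exact (hsum.differentiableAt (Metric.isOpen_ball.mem_nhds (by simp))).const_mul 2

end KoshliakovSeries

section DivisorDirichletSeries

theorem natCast_add_one_mul_cpow (d m : ℕ) (z : ℂ) :
    (((d + 1) * (m + 1) : ℕ) : ℂ) ^ z = ((d : ℂ) + 1) ^ z * ((m : ℂ) + 1) ^ z := by
  rw [Nat.cast_mul, natCast_mul_natCast_cpow, Nat.cast_add_one, Nat.cast_add_one]

theorem hasSum_csigma_mul_cpow_neg {a z : ℂ} (hz : 1 < z.re) (haz : 1 < (z - a).re) :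
    HasSum (fun n : ℕ => csigma a (n + 1) * ((n : ℂ) + 1) ^ (-z))
      (riemannZeta (z - a) * riemannZeta z) := by
  have h₁ := hasSum_natCast_add_one_cpow_neg haz
  have h₂ := hasSum_natCast_add_one_cpow_neg hz
  have hsum := summable_mul_of_summable_norm h₁.summable.norm h₂.summable.norm
  have hpair : HasSum (fun p : ℕ × ℕ => ((p.1 : ℂ) + 1) ^ a *
      (((p.1 + 1) * (p.2 + 1) : ℕ) : ℂ) ^ (-z)) (riemannZeta (z - a) * riemannZeta z) := by
    refine (h₁.mul h₂ hsum).congr_fun fun p => ?_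
    rw [natCast_add_one_mul_cpow, ← mul_assoc, ← cpow_add _ _ (Nat.cast_add_one_ne_zero p.1)]
    ring_nf
  have h := hasSum_csigma_mul (g := fun n => (n : ℂ) ^ (-z)) hpair
  simpa only [Nat.cast_add_one] using h

theorem summable_norm_csigma_mul_rpow_neg {a : ℂ} {b : ℝ} (hb : 1 < b) (hab : 1 < b - a.re) :
    Summable fun n : ℕ => ‖csigma a (n + 1)‖ * ((n : ℝ) + 1) ^ (-b) := by
  have h := (summable_nat_add_one_rpow (neg_lt_neg hab)).mul_of_nonneg
    (summable_nat_add_one_rpow (neg_lt_neg hb)) (fun n => by positivity) fun n => by positivity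
  convert! summable_norm_csigma_mul (s := a) (g := fun n => (n : ℝ) ^ (-b)) (fun n => by positivity)
    (h.congr fun p => ?_) using 3 with n
  · push_cast; rfl
  · push_cast
    rw [Real.mul_rpow (by positivity) (by positivity), ← mul_assoc, ← Real.rpow_add (by positivity)]
    ring_nf

theorem norm_csigma_le_norm_csigma_ofReal {s : ℂ} {a : ℝ} (h : s.re ≤ a) (n : ℕ) :
    ‖csigma s n‖ ≤ ‖csigma a n‖ := by
  have hreal : csigma a n = ((∑ d ∈ n.divisors, (d : ℝ) ^ a : ℝ) : ℂ) := by
    simp only [csigma, ofReal_sum, ofReal_cpow (Nat.cast_nonneg _), ofReal_natCast]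
  rw [hreal, norm_real]
  refine (norm_sum_le _ _).trans ((sum_le_sum fun d hd => ?_).trans (le_abs_self _))
  have hd := Nat.pos_of_mem_divisors hd
  rw [norm_natCast_cpow_of_pos hd]
  exact Real.rpow_le_rpow_of_exponent_le (mod_cast hd) h

theorem differentiable_csigma (n : ℕ) : Differentiable ℂ fun s => csigma s n := by
  refine Differentiable.fun_sum fun d hd s => ?_
  exact differentiableAt_id.const_cpow
    (.inl (Nat.cast_ne_zero.mpr (Nat.pos_of_mem_divisors hd).ne'))

end DivisorDirichletSeries

section DivisorLorentzSum

/-- The Dirichlet-type sum `∑ σ_{-s}(n) / (n² + t²)` to which Guinand's formula reduces `phiK`. -/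
noncomputable def divisorLorentzSum (s : ℂ) (t : ℝ) : ℂ :=
  ∑' n : ℕ, csigma (-s) (n + 1) * (((((n : ℝ) + 1) ^ 2 + t ^ 2)⁻¹ : ℝ) : ℂ)

theorem inv_sq_add_sq_le_rpow {a : ℝ} (ha : 0 < a) (t : ℝ) :
    (a ^ 2 + t ^ 2)⁻¹ ≤ a ^ (-2 : ℝ) := by
  rw [Real.rpow_neg ha.le, Real.rpow_two]
  gcongr
  exact le_add_of_nonneg_right (sq_nonneg t)

theorem norm_mul_inv_sq_add_sq_le (z : ℂ) (n : ℕ) (t : ℝ) :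
    ‖z * (((((n : ℝ) + 1) ^ 2 + t ^ 2)⁻¹ : ℝ) : ℂ)‖ ≤ ‖z‖ * ((n : ℝ) + 1) ^ (-2 : ℝ) := by
  rw [norm_mul, norm_real, Real.norm_of_nonneg (by positivity)]
  gcongr
  exact inv_sq_add_sq_le_rpow n.cast_add_one_pos t

theorem summable_norm_csigma_neg_mul_rpow_neg_two {s : ℂ} (hs : -1 < s.re) :
    Summable fun n : ℕ => ‖csigma (-s) (n + 1)‖ * ((n : ℝ) + 1) ^ (-2 : ℝ) :=
  summable_norm_csigma_mul_rpow_neg one_lt_two (by rw [neg_re]; linarith)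

theorem continuous_divisorLorentzSum {s : ℂ} (hs : -1 < s.re) :
    Continuous (divisorLorentzSum s) := by
  refine continuous_tsum (fun n => ?_) (summable_norm_csigma_neg_mul_rpow_neg_two hs)
    fun n t => norm_mul_inv_sq_add_sq_le _ n t
  refine continuous_const.mul (continuous_ofReal.comp (Continuous.inv₀ (by fun_prop) fun t => ?_))
  positivity

theorem differentiableOn_divisorLorentzSum (t : ℝ) :
    DifferentiableOn ℂ (divisorLorentzSum · t) {s | -1 < s.re} := by
  intro s hs
  obtain ⟨a, ha, has⟩ := exists_between (show -1 < s.re from hs)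
  have hU : IsOpen {w : ℂ | a < w.re} := isOpen_lt continuous_const continuous_re
  have hsum := summable_norm_csigma_neg_mul_rpow_neg_two (s := (a : ℂ)) ha
  refine ((differentiableOn_tsum_of_summable_norm hsum (fun n => ?_) hU
    fun n w (hw : a < w.re) => ?_).differentiableAt (hU.mem_nhds has)).differentiableWithinAt
  · exact (((differentiable_csigma _).comp differentiable_neg).mul_const _).differentiableOn
  · refine (norm_mul_inv_sq_add_sq_le _ n t).trans (mul_le_mul_of_nonneg_right ?_ (by positivity))
    simpa using norm_csigma_le_norm_csigma_ofReal (s := -w) (a := -a) (by simpa using hw.le) (n + 1)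

theorem summable_cpow_mul_inv_sq_add_sq {s : ℂ} (hs : -1 < s.re) (t : ℝ) :
    Summable fun p : ℕ × ℕ => ((p.1 : ℂ) + 1) ^ (-s) *
      ((((((p.1 : ℝ) + 1) * (p.2 + 1)) ^ 2 + t ^ 2)⁻¹ : ℝ) : ℂ) := by
  have h := (summable_nat_add_one_rpow (show -s.re - 2 < -1 by linarith)).mul_of_nonneg
    (summable_nat_add_one_rpow (show (-2 : ℝ) < -1 by norm_num)) (fun n => by positivity)
    fun n => by positivity
  refine h.of_norm_bounded fun p => ?_
  have hp : (0 : ℝ) < p.1 + 1 := by positivity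
  rw [norm_mul, norm_natCast_add_one_cpow, norm_real, Real.norm_of_nonneg (by positivity), neg_re,
    sub_eq_add_neg, Real.rpow_add hp, mul_assoc, ← Real.mul_rpow hp.le (by positivity)]
  gcongr
  exact inv_sq_add_sq_le_rpow (by positivity) t

theorem divisorLorentzSum_eq_tsum {s : ℂ} (hs : -1 < s.re) (t : ℝ) :
    divisorLorentzSum s t = ∑' p : ℕ × ℕ, ((p.1 : ℂ) + 1) ^ (-s) *
      ((((((p.1 : ℝ) + 1) * (p.2 + 1)) ^ 2 + t ^ 2)⁻¹ : ℝ) : ℂ) := by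
  have h := hasSum_csigma_mul (g := fun n => ((((n : ℝ) ^ 2 + t ^ 2)⁻¹ : ℝ) : ℂ))
    (by simpa only [Nat.cast_mul, Nat.cast_add_one] using
      (summable_cpow_mul_inv_sq_add_sq hs t).hasSum)
  simpa only [divisorLorentzSum, Nat.cast_add_one] using h.tsum_eq

end DivisorLorentzSum

section LambertSeries

theorem hasSum_exp_neg_mul_nat_add_one {v : ℝ} (hv : 0 < v) :
    HasSum (fun d : ℕ => Real.exp (-v * (d + 1))) (Real.exp v - 1)⁻¹ := by
  have hlt : Real.exp (-v) < 1 := Real.exp_lt_one_iff.mpr (neg_lt_zero.mpr hv)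
  have h := (hasSum_geometric_of_lt_one (Real.exp_pos _).le hlt).mul_left (Real.exp (-v))
  have hexp : Real.exp v - 1 ≠ 0 := (sub_pos.mpr (Real.one_lt_exp_iff.mpr hv)).ne'
  have hval : (Real.exp v - 1)⁻¹ = Real.exp (-v) * (1 - Real.exp (-v))⁻¹ := by
    rw [← mul_inv_cancel_left₀ (Real.exp_ne_zero v) (1 - Real.exp (-v))⁻¹, Real.exp_neg]
    field_simp
  rw [hval]
  refine h.congr_fun fun d => ?_
  rw [← Real.exp_nat_mul, ← Real.exp_add]
  ring_nf

theorem tsum_cot_I_mul {y : ℝ} (hy : 0 < y) :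
    ∑' m : ℕ, (1 / (I * y - ((m : ℂ) + 1)) + 1 / (I * y + ((m : ℂ) + 1))) =
      -2 * I * y * ((∑' m : ℕ, (((m : ℝ) + 1) ^ 2 + y ^ 2)⁻¹ : ℝ) : ℂ) := by
  rw [ofReal_tsum, ← tsum_mul_left]
  refine tsum_congr fun m => ?_
  have hsub : I * y - ((m : ℂ) + 1) ≠ 0 := fun h => hy.ne' (by simpa using congrArg im h)
  have hadd : I * y + ((m : ℂ) + 1) ≠ 0 := fun h => hy.ne' (by simpa using congrArg im h)
  have hmul : (((m : ℂ) + 1) ^ 2 + (y : ℂ) ^ 2) = -((I * y - (m + 1)) * (I * y + (m + 1))) := by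
    linear_combination (y : ℂ) ^ 2 * I_sq
  push_cast
  rw [hmul]
  field_simp
  ring

theorem inv_exp_two_pi_mul_sub_one_eq {y : ℝ} (hy : 0 < y) :
    (Real.exp (2 * π * y) - 1)⁻¹ =
      y / π * ∑' m : ℕ, (((m : ℝ) + 1) ^ 2 + y ^ 2)⁻¹ - 1 / 2 + (2 * π * y)⁻¹ := by
  have hy' : (y : ℂ) ≠ 0 := ofReal_ne_zero.mpr hy.ne'
  have hmem : I * y ∈ integerComplement := by
    rintro ⟨n, hn⟩
    exact hy.ne (by simpa using congrArg im hn)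
  have hcot := cot_series_rep' hmem
  rw [tsum_cot_I_mul hy, cot_pi_eq_exp_ratio] at hcot
  have harg : 2 * π * I * (I * y) = -(2 * π * y : ℂ) := by
    linear_combination (2 * π * y : ℂ) * I_mul_I
  have hexp : cexp (2 * π * y) - 1 ≠ 0 := by
    have := (sub_pos.mpr (Real.one_lt_exp_iff.mpr (by positivity : 0 < 2 * π * y))).ne'
    exact_mod_cast this
  have hexp' : 1 - (cexp (2 * π * y))⁻¹ ≠ 0 := by
    rwa [ne_eq, sub_eq_zero, eq_comm, inv_eq_one, ← sub_eq_zero]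
  rw [harg, Complex.exp_neg] at hcot
  apply ofReal_injective
  push_cast at hcot ⊢
  set S : ℂ := ∑' m : ℕ, (((m : ℂ) + 1) ^ 2 + (y : ℂ) ^ 2)⁻¹
  have hS : S = I / (2 * y) * (-2 * I * y * S) := by
    field_simp
    rw [I_sq]
    ring
  rw [hS, ← hcot]
  field_simp
  ring

theorem inv_exp_two_pi_mul_div_sub_one_eq {t a : ℝ} (ht : 0 < t) (ha : 0 < a) :
    (Real.exp (2 * π * t / a) - 1)⁻¹ =
      t / π * (a * ∑' m : ℕ, ((a * (m + 1)) ^ 2 + t ^ 2)⁻¹) - 1 / 2 + a / (2 * π * t) := by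
  have hterm (m : ℕ) : (((m : ℝ) + 1) ^ 2 + (t / a) ^ 2)⁻¹ =
      a ^ 2 * ((a * (m + 1)) ^ 2 + t ^ 2)⁻¹ := by
    field_simp
  rw [mul_div_assoc, inv_exp_two_pi_mul_sub_one_eq (div_pos ht ha), tsum_congr hterm, tsum_mul_left]
  field_simp

theorem summable_cpow_mul_exp_neg {s : ℂ} (hs : 1 < s.re) {b : ℝ} (hb : 0 < b) :
    Summable fun p : ℕ × ℕ =>
      ((p.1 : ℂ) + 1) ^ (-s - 1) * (Real.exp (-(b / (p.1 + 1)) * (p.2 + 1)) : ℂ) := by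
  have hv (k : ℕ) : 0 < b / ((k : ℝ) + 1) := by positivity
  refine .of_norm ((summable_prod_of_nonneg fun p => norm_nonneg _).mpr ⟨fun k => ?_, ?_⟩)
  · simpa only [norm_mul, norm_real, Real.norm_eq_abs, Real.abs_exp] using
      (hasSum_exp_neg_mul_nat_add_one (hv k)).summable.mul_left _
  · refine ((summable_nat_add_one_rpow (neg_lt_neg hs)).mul_left b⁻¹).of_nonneg_of_le
      (fun k => tsum_nonneg fun d => norm_nonneg _) fun k => ?_
    have hk : (0 : ℝ) < k + 1 := by positivity
    simp only [norm_mul, norm_real, Real.norm_eq_abs, Real.abs_exp, norm_natCast_add_one_cpow]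
    rw [tsum_mul_left, (hasSum_exp_neg_mul_nat_add_one (hv k)).tsum_eq]
    calc ((k : ℝ) + 1) ^ (-s - 1).re * (Real.exp (b / (k + 1)) - 1)⁻¹
        ≤ ((k : ℝ) + 1) ^ (-s.re - 1) * (b / (k + 1))⁻¹ := by
          have hexp : b / (k + 1) ≤ Real.exp (b / (k + 1)) - 1 := by
            linarith [Real.add_one_le_exp (b / ((k : ℝ) + 1))]
          rw [sub_re, neg_re, one_re]
          exact mul_le_mul_of_nonneg_left (inv_anti₀ (hv k) hexp) (by positivity)
      _ = b⁻¹ * ((k : ℝ) + 1) ^ (-s.re) := by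
          rw [Real.rpow_sub hk, Real.rpow_one]
          field_simp

end LambertSeries

section GuinandFormula

theorem two_mul_tsum_koshliakovPair {s : ℂ} (hs : 0 < s.re) {t : ℝ} (ht : 0 < t) (d : ℕ) :
    2 * ∑' m : ℕ, koshliakovPair s t (d, m) = (t : ℂ) ^ (s / 2) *
      (∑' k : ℕ, ((k : ℂ) + 1) ^ (-s - 1) * (Real.exp (-(2 * π * t / (k + 1)) * (d + 1)) : ℂ) -
        Gamma s * ((2 * π * t : ℝ) : ℂ) ^ (-s) * ((d : ℂ) + 1) ^ (-s)) := by
  have ht' : (t : ℂ) ≠ 0 := ofReal_ne_zero.mpr ht.ne'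
  have hd : (0 : ℝ) < d + 1 := by positivity
  have hexp (k : ℕ) : (Real.exp (-(2 * π * t / (k + 1)) * (d + 1)) : ℂ) =
      cexp (-(2 * π * ((d + 1) * t) : ℝ) / ((k : ℂ) + 1)) := by
    push_cast
    ring_nf
  have hpow : ((2 * π * ((d + 1) * t) : ℝ) : ℂ) ^ (-s) =
      ((2 * π * t : ℝ) : ℂ) ^ (-s) * ((d : ℂ) + 1) ^ (-s) := by
    have h := mul_cpow_ofReal_nonneg (by positivity : 0 ≤ 2 * π * t) hd.le (-s)
    rw [← ofReal_mul] at h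
    convert h using 2
    · ring_nf
    · push_cast; rfl
  simp only [hexp]
  rw [tsum_cpow_mul_exp_neg_div hs (mul_pos hd ht), hpow, ← mul_assoc, add_sub_cancel_left,
    ← tsum_mul_left, ← tsum_mul_left]
  refine tsum_congr fun m => ?_
  have hquot : (t : ℂ) ^ (s / 2) * (((m + 1) / ((d + 1) * t) : ℝ) : ℂ) ^ (s / 2) =
      ((d : ℂ) + 1) ^ (-s / 2) * ((m : ℂ) + 1) ^ (s / 2) := by
    have h := mul_cpow_ofReal_nonneg ht.le
      (by positivity : 0 ≤ ((m : ℝ) + 1) / ((d + 1) * t)) (s / 2)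
    have h' := div_cpow_ofReal_nonneg (by positivity : (0 : ℝ) ≤ m + 1) hd.le (s / 2)
    push_cast at h h' ⊢
    rw [← h, neg_div, cpow_neg, inv_mul_eq_div, ← h']
    congr 1
    field_simp
  rw [koshliakovPair, ← hquot]
  ring_nf

theorem phiK_eq_tsum_inv_exp_sub_one {s : ℂ} (hs : 1 < s.re) {t : ℝ} (ht : 0 < t) :
    phiK t s = (t : ℂ) ^ (s / 2) *
      (∑' k : ℕ, ((k : ℂ) + 1) ^ (-s - 1) * ((Real.exp (2 * π * t / (k + 1)) - 1)⁻¹ : ℝ) -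
        Gamma s * riemannZeta s * ((2 * π * t : ℝ) : ℂ) ^ (-s)) := by
  have hzeta := (hasSum_natCast_add_one_cpow_neg hs).mul_left
    (Gamma s * ((2 * π * t : ℝ) : ℂ) ^ (-s))
  have hsum := summable_cpow_mul_exp_neg hs (by positivity : 0 < 2 * π * t)
  have hgeom (k : ℕ) := hasSum_ofReal.mpr
    (hasSum_exp_neg_mul_nat_add_one (by positivity : 0 < 2 * π * t / ((k : ℝ) + 1)))
  have hcol : Summable fun d : ℕ => ∑' k : ℕ, ((k : ℂ) + 1) ^ (-s - 1) *
      (Real.exp (-(2 * π * t / (k + 1)) * (d + 1)) : ℂ) := hsum.prod_symm.prod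
  rw [phiK_eq_tsum_koshliakovPair s ht, (summable_koshliakovPair s ht).tsum_prod, ← tsum_mul_left]
  simp only [two_mul_tsum_koshliakovPair (one_pos.trans hs) ht]
  rw [tsum_mul_left, hcol.tsum_sub hzeta.summable, hzeta.tsum_eq, hsum.tsum_comm]
  simp only [tsum_mul_left, (hgeom _).tsum_eq]
  ring

/-- The closed form of `phiK` given by Guinand's formula. -/
noncomputable def guinandSum (s : ℂ) (t : ℝ) : ℂ :=
  (t : ℂ) ^ (s / 2) * (t / π * divisorLorentzSum s t - riemannZeta (1 + s) / 2 +
    riemannZeta s / (2 * π * t) - Gamma s * riemannZeta s * ((2 * π * t : ℝ) : ℂ) ^ (-s))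

theorem phiK_eq_guinandSum_of_one_lt_re {s : ℂ} (hs : 1 < s.re) {t : ℝ} (ht : 0 < t) :
    phiK t s = guinandSum s t := by
  have hlorentz := summable_cpow_mul_inv_sq_add_sq (show -1 < s.re by linarith) t
  have hzeta := (hasSum_natCast_add_one_cpow_neg hs).mul_left (1 / (2 * π * t : ℂ))
  have hzeta' := (hasSum_natCast_add_one_cpow_neg (s := 1 + s)
    (by rw [add_re, one_re]; linarith)).mul_left (1 / 2)
  have hterm (k : ℕ) : ((k : ℂ) + 1) ^ (-s - 1) * ((Real.exp (2 * π * t / (k + 1)) - 1)⁻¹ : ℝ) =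
      t / π * ∑' m : ℕ, ((k : ℂ) + 1) ^ (-s) *
        ((((((k : ℝ) + 1) * (m + 1)) ^ 2 + t ^ 2)⁻¹ : ℝ) : ℂ) -
        1 / 2 * ((k : ℂ) + 1) ^ (-(1 + s)) + 1 / (2 * π * t) * ((k : ℂ) + 1) ^ (-s) := by
    have hk : (k : ℂ) + 1 ≠ 0 := k.cast_add_one_ne_zero
    have hpow : ((k : ℂ) + 1) ^ (-s) = ((k : ℂ) + 1) ^ (-s - 1) * (k + 1) := by
      rw [cpow_sub _ _ hk, cpow_one, div_mul_cancel₀ _ hk]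
    rw [inv_exp_two_pi_mul_div_sub_one_eq ht k.cast_add_one_pos, tsum_mul_left, ← ofReal_tsum,
      show -(1 + s) = -s - 1 by ring, hpow]
    push_cast
    ring
  rw [phiK_eq_tsum_inv_exp_sub_one hs ht, guinandSum,
    divisorLorentzSum_eq_tsum (show -1 < s.re by linarith), hlorentz.tsum_prod]
  simp only [hterm]
  rw [((hlorentz.prod.mul_left _).sub hzeta'.summable).tsum_add hzeta.summable,
    (hlorentz.prod.mul_left _).tsum_sub hzeta'.summable, tsum_mul_left, hzeta.tsum_eq,
    hzeta'.tsum_eq]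
  ring

theorem differentiableAt_Gamma_of_neg_one_lt_re {s : ℂ} (hs : -1 < s.re) (hs₀ : s ≠ 0) :
    DifferentiableAt ℂ Gamma s := by
  refine differentiableAt_Gamma _ fun m hm => hs₀ ?_
  have hm₁ : (m : ℝ) < 1 := by simpa [hm] using hs
  have hm₀ : m = 0 := Nat.lt_one_iff.mp (mod_cast hm₁)
  simpa [hm₀] using hm

theorem differentiableAt_divisorLorentzSum {s : ℂ} (hs : -1 < s.re) (t : ℝ) :
    DifferentiableAt ℂ (divisorLorentzSum · t) s :=
  (differentiableOn_divisorLorentzSum t).differentiableAt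
    ((isOpen_lt continuous_const continuous_re).mem_nhds hs)

theorem meromorphicOn_guinandSum {t : ℝ} (ht : 0 < t) :
    MeromorphicOn (guinandSum · t) {s | -1 < s.re} := by
  have ht₂ : ((2 * π * t : ℝ) : ℂ) ≠ 0 := ofReal_ne_zero.mpr (by positivity)
  intro s hs
  have hlorentz : MeromorphicAt (divisorLorentzSum · t) s :=
    ((differentiableOn_divisorLorentzSum t).analyticAt
      ((isOpen_lt continuous_const continuous_re).mem_nhds hs)).meromorphicAt
  have hzeta : MeromorphicAt (fun s => riemannZeta (1 + s)) s :=
    (meromorphicAt_riemannZeta (1 + s)).comp_analyticAt (by fun_prop)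
  have hzeta' := meromorphicAt_riemannZeta s
  have hGamma := Meromorphic.Gamma s
  have hpow : MeromorphicAt (fun s => (t : ℂ) ^ (s / 2)) s :=
    (analyticAt_const_cpow (ofReal_ne_zero.mpr ht.ne') (by fun_prop)).meromorphicAt
  have hpow' : MeromorphicAt (fun s => ((2 * π * t : ℝ) : ℂ) ^ (-s)) s :=
    (analyticAt_const_cpow ht₂ (by fun_prop)).meromorphicAt
  unfold guinandSum
  fun_prop

theorem continuousAt_guinandSum {s : ℂ} (hs : -1 < s.re) (hs₀ : s ≠ 0) (hs₁ : s ≠ 1) {t : ℝ}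
    (ht : 0 < t) : ContinuousAt (guinandSum · t) s := by
  have ht₁ : (t : ℂ) ≠ 0 := ofReal_ne_zero.mpr ht.ne'
  have ht₂ : ((2 * π * t : ℝ) : ℂ) ≠ 0 := ofReal_ne_zero.mpr (by positivity)
  have hlorentz := (differentiableAt_divisorLorentzSum hs t).continuousAt
  have hzeta : ContinuousAt (fun s => riemannZeta (1 + s)) s :=
    (differentiableAt_riemannZeta (by simpa using hs₀)).continuousAt.comp (by fun_prop)
  have hzeta' := (differentiableAt_riemannZeta hs₁).continuousAt
  have hGamma := (differentiableAt_Gamma_of_neg_one_lt_re hs hs₀).continuousAt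
  have hpow : ContinuousAt (fun s => (t : ℂ) ^ (s / 2)) s :=
    (by fun_prop : ContinuousAt (fun s : ℂ => s / 2) s).const_cpow (.inl ht₁)
  have hpow' : ContinuousAt (fun s => ((2 * π * t : ℝ) : ℂ) ^ (-s)) s :=
    continuousAt_neg.const_cpow (.inl ht₂)
  unfold guinandSum
  fun_prop

theorem phiK_eq_guinandSum {s : ℂ} (hs : -1 < s.re) (hs₀ : s ≠ 0) (hs₁ : s ≠ 1) {t : ℝ}
    (ht : 0 < t) : phiK t s = guinandSum s t := by
  have hphi := differentiable_phiK ht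
  refine eq_of_meromorphicOn_of_isPreconnected (f := phiK t) (g := (guinandSum · t)) (z₀ := 2)
    (fun z _ => (hphi.analyticAt z).meromorphicAt) (meromorphicOn_guinandSum ht)
    (convex_halfSpace_re_gt (-1)).isPreconnected (by norm_num) hs ?_ hphi.continuous.continuousAt
    (continuousAt_guinandSum hs hs₀ hs₁ ht)
  have hnhds : {z : ℂ | 1 < z.re} ∈ 𝓝 (2 : ℂ) :=
    (isOpen_lt continuous_const continuous_re).mem_nhds (by norm_num)
  filter_upwards [nhdsWithin_le_nhds hnhds] with z hz using phiK_eq_guinandSum_of_one_lt_re hz ht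

end GuinandFormula

section Remainder

theorem cos_pi_mul_div_two_ne_zero {z : ℂ} (h₁ : -1 < z.re) (h₃ : z.re < 3) (hz : z ≠ 1) :
    Complex.cos (π * z / 2) ≠ 0 := by
  rw [Complex.cos_ne_zero_iff]
  intro k hk
  have hzk : z = ((2 * k + 1 : ℤ) : ℂ) := by
    have hπ : (π : ℂ) ≠ 0 := ofReal_ne_zero.mpr Real.pi_ne_zero
    field_simp at hk
    exact_mod_cast hk
  rw [hzk, intCast_re] at h₁ h₃
  norm_cast at h₁ h₃
  exact hz (by rw [hzk, show k = 0 by lia]; simp)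

theorem sin_pi_mul_div_two_ne_zero {z : ℂ} (h₁ : -2 < z.re) (h₂ : z.re < 2) (hz : z ≠ 0) :
    Complex.sin (π * z / 2) ≠ 0 := by
  have h := cos_pi_mul_div_two_ne_zero (z := z + 1) (by rw [add_re, one_re]; linarith)
    (by rw [add_re, one_re]; linarith) (by simpa using hz)
  rw [show (π : ℂ) * (z + 1) / 2 = π * z / 2 + π / 2 by ring, Complex.cos_add_pi_div_two] at h
  simpa using h

theorem sin_pi_mul_one_add_div_two (z : ℂ) :
    Complex.sin (π * (1 + z) / 2) = Complex.cos (π * z / 2) := by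
  rw [← Complex.sin_add_pi_div_two]; ring_nf

theorem cos_pi_mul_one_add_div_two (z : ℂ) :
    Complex.cos (π * (1 + z) / 2) = -Complex.sin (π * z / 2) := by
  rw [← Complex.cos_add_pi_div_two]; ring_nf

theorem Gamma_mul_riemannZeta_mul_two_pi_cpow_neg {s : ℂ} (hs : -1 < s.re) (hs₀ : s ≠ 0)
    (hs₁ : s.re < 1) :
    Gamma s * riemannZeta s * ((2 * π : ℝ) : ℂ) ^ (-s) =
      riemannZeta (1 - s) / (2 * Complex.cos (π * s / 2)) := by
  have hne : s ≠ 1 := by rintro rfl; simp at hs₁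
  have hcos := cos_pi_mul_div_two_ne_zero hs (by linarith) hne
  have hpole : ∀ n : ℕ, s ≠ -n := by
    rintro (_ | n) rfl
    · simp at hs₀
    · have h : (-1 : ℝ) < -((n + 1 : ℕ) : ℝ) := by simpa using hs
      push_cast at h
      linarith [n.cast_nonneg (α := ℝ)]
  rw [riemannZeta_one_sub hpole hne]
  push_cast
  field_simp

/-- The function `t^{-s/2}(φ(t,s) - ζ(s) t^{s/2-1}/(2π))`; the integral of the theorem is a value of
the Mellin transform of its product with a Lorentz kernel. -/
noncomputable def koshliakovRemainder (s : ℂ) (t : ℝ) : ℂ :=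
  (t : ℂ) ^ (-s / 2) * (phiK t s - riemannZeta s / (2 * π) * (t : ℂ) ^ (s / 2 - 1))

variable {s : ℂ}

theorem koshliakovRemainder_eq (hs : -1 < s.re) (hs₀ : s ≠ 0) (hs₁ : s.re < 1) {t : ℝ}
    (ht : 0 < t) :
    koshliakovRemainder s t =
      -(riemannZeta (1 - s) / (2 * Complex.cos (π * s / 2))) * (t : ℂ) ^ (-s)
        - riemannZeta (1 + s) / 2 + t / π * divisorLorentzSum s t := by
  have ht' : (t : ℂ) ≠ 0 := ofReal_ne_zero.mpr ht.ne'
  have hπ : (π : ℂ) ≠ 0 := ofReal_ne_zero.mpr Real.pi_ne_zero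
  have hone : (t : ℂ) ^ (-s / 2) * (t : ℂ) ^ (s / 2) = 1 := by
    rw [← cpow_add _ _ ht', neg_div, neg_add_cancel, cpow_zero]
  have hmul : ((2 * π * t : ℝ) : ℂ) ^ (-s) = ((2 * π : ℝ) : ℂ) ^ (-s) * (t : ℂ) ^ (-s) := by
    rw [ofReal_mul, mul_cpow_ofReal_nonneg (by positivity) ht.le]
  have hcancel : ∀ z : ℂ, (t : ℂ) ^ (-s / 2) * ((t : ℂ) ^ (s / 2) * z) = z := fun z => by
    rw [← mul_assoc, hone, one_mul]
  rw [koshliakovRemainder, phiK_eq_guinandSum hs hs₀ (by rintro rfl; simp at hs₁) ht, guinandSum,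
    hmul, cpow_sub _ _ ht', cpow_one, mul_sub, mul_left_comm _ (riemannZeta s / (2 * π)),
    mul_div_assoc', hone, hcancel, ← Gamma_mul_riemannZeta_mul_two_pi_cpow_neg hs hs₀ hs₁]
  field_simp
  ring

theorem continuousOn_koshliakovRemainder (hs : -1 < s.re) (hs₀ : s ≠ 0) (hs₁ : s.re < 1) :
    ContinuousOn (koshliakovRemainder s) (Set.Ioi 0) := by
  refine ContinuousOn.congr (f := fun t : ℝ =>
    -(riemannZeta (1 - s) / (2 * Complex.cos (π * s / 2))) * (t : ℂ) ^ (-s)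
      - riemannZeta (1 + s) / 2 + t / π * divisorLorentzSum s t) ?_
    fun t ht => koshliakovRemainder_eq hs hs₀ hs₁ ht
  have hsum := continuous_divisorLorentzSum hs
  have hpow : ContinuousOn (fun t : ℝ => (t : ℂ) ^ (-s)) (Set.Ioi 0) := fun t ht =>
    (continuousAt_ofReal_cpow_const t (-s) (.inr (ne_of_gt ht))).continuousWithinAt
  fun_prop

theorem koshliakovRemainder_isBigO_atTop (hs : -1 < s.re) :
    koshliakovRemainder s =O[atTop] fun t : ℝ => t ^ (-1 : ℝ) := by
  obtain ⟨C, hC⟩ := exists_norm_phiK_le s one_pos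
  have hexp : (fun t : ℝ => t ^ (1 / 2 : ℝ) * Real.exp (-(koshliakovRate / 2) * √t)) =O[atTop]
      fun t : ℝ => t ^ (-1 : ℝ) := by
    have h := ((isLittleO_exp_neg_mul_rpow_atTop (half_pos koshliakovRate_pos) (-3)).isBigO
      |>.comp_tendsto Real.tendsto_sqrt_atTop)
    refine ((Asymptotics.isBigO_refl (fun t : ℝ => t ^ (1 / 2 : ℝ)) atTop).mul h).congr'
      .rfl ?_
    filter_upwards [eventually_gt_atTop 0] with t ht
    rw [Function.comp_apply, Real.sqrt_eq_rpow, ← Real.rpow_mul ht.le, ← Real.rpow_add ht]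
    norm_num
  have hphi : (fun t : ℝ => (t : ℂ) ^ (-s / 2) * phiK t s) =O[atTop] fun t : ℝ => t ^ (-1 : ℝ) := by
    refine (Asymptotics.IsBigO.of_bound C ?_).trans hexp
    filter_upwards [eventually_ge_atTop 1] with t ht
    have hpow : t ^ (-s / 2).re ≤ t ^ (1 / 2 : ℝ) :=
      Real.rpow_le_rpow_of_exponent_le ht (by rw [div_ofNat_re, neg_re]; linarith)
    rw [norm_mul, norm_cpow_eq_rpow_re_of_pos (by linarith), Real.norm_of_nonneg (by positivity),
      mul_left_comm]
    exact mul_le_mul hpow (hC t ht) (norm_nonneg _) (by positivity)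
  have hinv : (fun t : ℝ => riemannZeta s / (2 * π) * (t : ℂ) ^ (-1 : ℂ)) =O[atTop]
      fun t : ℝ => t ^ (-1 : ℝ) := by
    refine .of_bound ‖riemannZeta s / (2 * π)‖ ?_
    filter_upwards [eventually_gt_atTop 0] with t ht
    rw [norm_mul, norm_cpow_eq_rpow_re_of_pos ht, neg_re, one_re,
      Real.norm_of_nonneg (by positivity)]
  refine (hphi.sub hinv).congr' ?_ .rfl
  filter_upwards [eventually_gt_atTop 0] with t ht
  rw [koshliakovRemainder, mul_sub, mul_left_comm _ (riemannZeta s / (2 * π)),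
    ← cpow_add _ _ (ofReal_ne_zero.mpr ht.ne'), show -s / 2 + (s / 2 - 1) = -1 by ring]

theorem koshliakovRemainder_isBigO_nhdsGT_zero (hs : -1 < s.re) (hs₀ : s ≠ 0) (hs₁ : s.re < 1) :
    koshliakovRemainder s =O[𝓝[>] 0] fun t : ℝ => t ^ (-1 : ℝ) := by
  have hpow : ∀ a : ℂ, a.re < 1 →
      (fun t : ℝ => (t : ℂ) ^ (-a)) =O[𝓝[>] 0] fun t : ℝ => t ^ (-1 : ℝ) := fun a ha => by
    refine .of_bound 1 ?_
    filter_upwards [Ioc_mem_nhdsGT one_pos] with t ⟨ht, ht₁⟩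
    rw [norm_cpow_eq_rpow_re_of_pos ht, one_mul, Real.norm_of_nonneg (by positivity), neg_re]
    exact Real.rpow_le_rpow_of_exponent_ge ht ht₁ (by linarith)
  have hone : (fun _ : ℝ => (1 : ℂ)) =O[𝓝[>] 0] fun t : ℝ => t ^ (-1 : ℝ) := by
    simpa using hpow 0 (by simp)
  have hsum : (fun t : ℝ => (t / π : ℂ) * divisorLorentzSum s t) =O[𝓝[>] 0] fun _ => (1 : ℂ) := by
    have := continuous_divisorLorentzSum hs
    have hcont : Continuous fun t : ℝ => (t / π : ℂ) * divisorLorentzSum s t := by fun_prop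
    exact (hcont.tendsto 0).isBigO_one ℂ |>.mono nhdsWithin_le_nhds
  refine ((((hpow s hs₁).const_mul_left
    (-(riemannZeta (1 - s) / (2 * Complex.cos (π * s / 2))))).sub
    (hone.const_mul_left (riemannZeta (1 + s) / 2))).add (hsum.trans hone)).congr' ?_ .rfl
  filter_upwards [self_mem_nhdsWithin] with t ht
  rw [koshliakovRemainder_eq hs hs₀ hs₁ ht, mul_one]

end Remainder

section LorentzMellin

theorem image_div_one_add_Ioi : (fun t : ℝ => t / (1 + t)) '' Set.Ioi 0 = Set.Ioo 0 1 := by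
  refine Set.Subset.antisymm ?_ fun y ⟨hy₀, hy₁⟩ => ?_
  · rintro _ ⟨t, ht, rfl⟩
    have ht' : (0 : ℝ) < t := ht
    exact ⟨by positivity, (div_lt_one (by positivity)).mpr (by linarith)⟩
  · have hy : 0 < 1 - y := sub_pos.mpr hy₁
    refine ⟨y / (1 - y), div_pos hy₀ hy, ?_⟩
    field_simp
    ring

theorem injOn_div_one_add_Ioi : Set.InjOn (fun t : ℝ => t / (1 + t)) (Set.Ioi 0) := by
  intro a (ha : 0 < a) b (hb : 0 < b) hab
  dsimp only at hab
  rw [div_eq_div_iff (by positivity) (by positivity)] at hab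
  linarith

theorem hasDerivWithinAt_div_one_add {t : ℝ} (ht : t ∈ Set.Ioi (0 : ℝ)) :
    HasDerivWithinAt (fun t : ℝ => t / (1 + t)) ((1 + t) ^ 2)⁻¹ (Set.Ioi 0) t := by
  have ht' : 0 < t := ht
  have h := (hasDerivAt_id t).div ((hasDerivAt_id t).const_add 1)
    (add_pos one_pos ht').ne'
  refine (h.congr_deriv ?_).hasDerivWithinAt
  simp

/-- Substituting `y = t / (1 + t)` in the Beta integral. -/
theorem hasMellin_one_add_cpow_neg {u v : ℂ} (hu : 0 < u.re) (hv : 0 < v.re) :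
    HasMellin (fun t : ℝ => ((1 + t : ℝ) : ℂ) ^ (-(u + v))) u (betaIntegral u v) := by
  have hcongr : ∀ t ∈ Set.Ioi (0 : ℝ),
      |((1 + t) ^ 2)⁻¹| • (((t / (1 + t) : ℝ) : ℂ) ^ (u - 1) *
        (1 - ((t / (1 + t) : ℝ) : ℂ)) ^ (v - 1)) =
      (t : ℂ) ^ (u - 1) • ((1 + t : ℝ) : ℂ) ^ (-(u + v)) := by
    intro t (ht : 0 < t)
    have hpos : 0 < 1 + t := by positivity
    have hne : ((1 + t : ℝ) : ℂ) ≠ 0 := ofReal_ne_zero.mpr hpos.ne'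
    have hsub : 1 - ((t / (1 + t) : ℝ) : ℂ) = ((1 / (1 + t) : ℝ) : ℂ) := by
      rw [← ofReal_one, ← ofReal_sub]
      congr 1
      field_simp
      ring
    rw [hsub, ofReal_div, ofReal_div, div_cpow_ofReal_nonneg ht.le hpos.le,
      div_cpow_ofReal_nonneg zero_le_one hpos.le, ofReal_one, one_cpow, abs_of_pos (by positivity),
      real_smul, smul_eq_mul, show -(u + v) = -(u - 1) + -(v - 1) + -2 by ring,
      cpow_add _ _ hne, cpow_add _ _ hne, cpow_neg, cpow_neg, cpow_neg _ 2]
    push_cast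
    rw [← cpow_ofNat]
    ring
  have hint := betaIntegral_convergent hu hv
  rw [intervalIntegrable_iff_integrableOn_Ioo_of_le zero_le_one, ← image_div_one_add_Ioi,
    integrableOn_image_iff_integrableOn_abs_deriv_smul measurableSet_Ioi
      (fun _ => hasDerivWithinAt_div_one_add) injOn_div_one_add_Ioi] at hint
  refine ⟨hint.congr_fun hcongr measurableSet_Ioi, ?_⟩
  rw [mellin, betaIntegral, intervalIntegral.integral_of_le zero_le_one,
    integral_Ioc_eq_integral_Ioo, ← image_div_one_add_Ioi,
    integral_image_eq_integral_abs_deriv_smul measurableSet_Ioi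
      (fun _ => hasDerivWithinAt_div_one_add) injOn_div_one_add_Ioi]
  exact (setIntegral_congr_fun measurableSet_Ioi hcongr).symm

theorem hasMellin_inv_one_add {u : ℂ} (hu₀ : 0 < u.re) (hu₁ : u.re < 1) :
    HasMellin (fun t : ℝ => (1 + (t : ℂ))⁻¹) u (π / Complex.sin (π * u)) := by
  have hv : 0 < (1 - u).re := by rw [sub_re, one_re]; linarith
  have h := hasMellin_one_add_cpow_neg hu₀ hv
  have hB := Gamma_mul_Gamma_eq_betaIntegral hu₀ hv
  rw [Gamma_mul_Gamma_one_sub, add_sub_cancel, Gamma_one, one_mul] at hB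
  rw [hB]
  simpa only [add_sub_cancel, cpow_neg_one, ofReal_add, ofReal_one] using h

theorem hasMellin_inv_one_add_sq {z : ℂ} (hz₀ : 0 < z.re) (hz₂ : z.re < 2) :
    HasMellin (fun t : ℝ => (1 + (t : ℂ) ^ 2)⁻¹) z (π / 2 / Complex.sin (π * z / 2)) := by
  obtain ⟨hconv, hval⟩ := hasMellin_inv_one_add (u := z / ((2 : ℝ) : ℂ))
    (by rw [div_ofReal_re]; linarith) (by rw [div_ofReal_re]; linarith)
  have hfun : (fun t : ℝ => (1 + (t : ℂ) ^ 2)⁻¹) =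
      fun t : ℝ => (1 + ((t ^ (2 : ℝ) : ℝ) : ℂ))⁻¹ := by
    funext t
    rw [Real.rpow_ofNat, ofReal_pow]
  rw [hfun]
  refine ⟨(MellinConvergent.comp_rpow (f := fun t : ℝ => (1 + (t : ℂ))⁻¹) two_ne_zero).mpr hconv,
    ?_⟩
  rw [mellin_comp_rpow (fun t : ℝ => (1 + (t : ℂ))⁻¹), hval, real_smul, abs_two, ofReal_inv,
    ofReal_ofNat, mul_div_assoc]
  ring

theorem hasMellin_inv_sq_add_sq {a : ℝ} (ha : 0 < a) {z : ℂ} (hz₀ : 0 < z.re) (hz₂ : z.re < 2) :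
    HasMellin (fun t : ℝ => ((a : ℂ) ^ 2 + (t : ℂ) ^ 2)⁻¹) z
      (π / 2 * (a : ℂ) ^ (z - 2) / Complex.sin (π * z / 2)) := by
  have ha' : (a : ℂ) ≠ 0 := ofReal_ne_zero.mpr ha.ne'
  obtain ⟨hconv, hval⟩ := hasMellin_inv_one_add_sq hz₀ hz₂
  have hfun : (fun t : ℝ => ((a : ℂ) ^ 2 + (t : ℂ) ^ 2)⁻¹) = fun t : ℝ =>
      ((a : ℂ) ^ 2)⁻¹ • (1 + ((a⁻¹ * t : ℝ) : ℂ) ^ 2)⁻¹ := by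
    funext t
    rw [smul_eq_mul, ← mul_inv]
    push_cast
    field_simp
  rw [hfun]
  refine ⟨MellinConvergent.const_smul ((MellinConvergent.comp_mul_left
    (f := fun t : ℝ => (1 + (t : ℂ) ^ 2)⁻¹) (inv_pos.mpr ha)).mpr hconv) _, ?_⟩
  rw [mellin_const_smul, mellin_comp_mul_left (fun t : ℝ => (1 + (t : ℂ) ^ 2)⁻¹) _
    (inv_pos.mpr ha), hval, ofReal_inv, cpow_neg, inv_cpow_ofReal_nonneg ha.le, inv_inv,
    cpow_sub _ _ ha', cpow_ofNat, smul_eq_mul, smul_eq_mul]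
  ring

/-- The value of `(a^w - x^w) / (a² - x²)`, extended by its limit to `a = x`. -/
noncomputable def sqQuotient (w : ℂ) (x a : ℝ) : ℂ :=
  if x = a then w * (a : ℂ) ^ (w - 2) / 2
  else ((a : ℂ) ^ w - (x : ℂ) ^ w) / ((a : ℂ) ^ 2 - (x : ℂ) ^ 2)

theorem ofReal_sq_add_sq_ne_zero {a : ℝ} (ha : 0 < a) (t : ℝ) : (a : ℂ) ^ 2 + (t : ℂ) ^ 2 ≠ 0 := by
  have : a ^ 2 + t ^ 2 ≠ 0 := by positivity
  exact_mod_cast this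

/-- The product of two Lorentz kernels, with the factor `t²` that shifts its Mellin transform to the
strip `0 < Re w < 2`. -/
noncomputable def lorentzProduct (x a t : ℝ) : ℂ :=
  (t : ℂ) ^ 2 / (((x : ℂ) ^ 2 + (t : ℂ) ^ 2) * ((a : ℂ) ^ 2 + (t : ℂ) ^ 2))

theorem sq_sub_sq_ne_zero {x a : ℝ} (hx : 0 < x) (ha : 0 < a) (hxa : x ≠ a) :
    (a : ℂ) ^ 2 - (x : ℂ) ^ 2 ≠ 0 := by
  rw [sub_ne_zero]
  norm_cast
  exact fun h => hxa ((pow_left_inj₀ ha.le hx.le two_ne_zero).mp h).symm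

theorem hasMellin_lorentzProduct_of_ne {w : ℂ} (hw₀ : 0 < w.re) (hw₂ : w.re < 2) {x a : ℝ}
    (hx : 0 < x) (ha : 0 < a) (hxa : x ≠ a) :
    HasMellin (lorentzProduct x a) w (π / 2 / Complex.sin (π * w / 2) * sqQuotient w x a) := by
  have hne := sq_sub_sq_ne_zero hx ha hxa
  obtain ⟨hca, hva⟩ := hasMellin_inv_sq_add_sq ha hw₀ hw₂
  obtain ⟨hcx, hvx⟩ := hasMellin_inv_sq_add_sq hx hw₀ hw₂
  have hfun : lorentzProduct x a = fun t : ℝ =>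
      ((a : ℂ) ^ 2 / ((a : ℂ) ^ 2 - (x : ℂ) ^ 2)) • ((a : ℂ) ^ 2 + (t : ℂ) ^ 2)⁻¹ -
        ((x : ℂ) ^ 2 / ((a : ℂ) ^ 2 - (x : ℂ) ^ 2)) • ((x : ℂ) ^ 2 + (t : ℂ) ^ 2)⁻¹ := by
    funext t
    have h₁ := ofReal_sq_add_sq_ne_zero ha t
    have h₂ := ofReal_sq_add_sq_ne_zero hx t
    rw [lorentzProduct, smul_eq_mul, smul_eq_mul]
    field_simp
    ring
  rw [hfun]
  refine ⟨(hasMellin_sub (hca.const_smul _) (hcx.const_smul _)).1, ?_⟩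
  rw [(hasMellin_sub (hca.const_smul _) (hcx.const_smul _)).2, mellin_const_smul,
    mellin_const_smul, hva, hvx, sqQuotient, if_neg hxa,
    cpow_sub _ _ (ofReal_ne_zero.mpr ha.ne'), cpow_sub _ _ (ofReal_ne_zero.mpr hx.ne'), cpow_ofNat,
    cpow_ofNat, smul_eq_mul, smul_eq_mul]
  have ha' : (a : ℂ) ≠ 0 := ofReal_ne_zero.mpr ha.ne'
  have hx' : (x : ℂ) ≠ 0 := ofReal_ne_zero.mpr hx.ne'
  field_simp

theorem norm_lorentzProduct {x a : ℝ} (t : ℝ) :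
    ‖lorentzProduct x a t‖ = t ^ 2 / ((x ^ 2 + t ^ 2) * (a ^ 2 + t ^ 2)) := by
  have h : lorentzProduct x a t = ((t ^ 2 / ((x ^ 2 + t ^ 2) * (a ^ 2 + t ^ 2)) : ℝ) : ℂ) := by
    rw [lorentzProduct]
    push_cast
    rfl
  rw [h, norm_real, Real.norm_of_nonneg (by positivity)]

theorem norm_lorentzProduct_le {x a b : ℝ} (hx : 0 < x) (hb : 0 < b) (hba : b ≤ a) (t : ℝ) :
    ‖lorentzProduct x a t‖ ≤ ‖lorentzProduct x b t‖ := by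
  rw [norm_lorentzProduct, norm_lorentzProduct]
  gcongr

theorem measurable_lorentzProduct (x a : ℝ) : Measurable (lorentzProduct x a) := by
  unfold lorentzProduct
  fun_prop

theorem continuousAt_lorentzProduct {x a : ℝ} (hx : 0 < x) (ha : 0 < a) (t : ℝ) :
    ContinuousAt (fun b => lorentzProduct x b t) a :=
  ContinuousAt.div continuousAt_const (by fun_prop)
    (mul_ne_zero (ofReal_sq_add_sq_ne_zero hx t) (ofReal_sq_add_sq_ne_zero ha t))

theorem aestronglyMeasurable_cpow_smul_lorentzProduct (w : ℂ) (x a : ℝ) :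
    AEStronglyMeasurable (fun t : ℝ => (t : ℂ) ^ (w - 1) • lorentzProduct x a t)
      (volume.restrict (Set.Ioi 0)) :=
  ((measurable_ofReal.pow_const _).smul (measurable_lorentzProduct x a)).aestronglyMeasurable

theorem mellinConvergent_lorentzProduct {w : ℂ} (hw₀ : 0 < w.re) (hw₂ : w.re < 2) {x a : ℝ}
    (hx : 0 < x) (ha : 0 < a) : MellinConvergent (lorentzProduct x a) w := by
  rcases eq_or_ne x a with rfl | hxa
  · have h := (hasMellin_lorentzProduct_of_ne hw₀ hw₂ hx (half_pos hx) (by linarith)).1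
    refine Integrable.mono h (aestronglyMeasurable_cpow_smul_lorentzProduct w x x)
      (.of_forall fun t => ?_)
    rw [norm_smul, norm_smul]
    exact mul_le_mul_of_nonneg_left (norm_lorentzProduct_le hx (half_pos hx) (by linarith) t)
      (norm_nonneg _)
  · exact (hasMellin_lorentzProduct_of_ne hw₀ hw₂ hx ha hxa).1

theorem continuousAt_mellin_lorentzProduct {w : ℂ} (hw₀ : 0 < w.re) (hw₂ : w.re < 2) {x a : ℝ}
    (hx : 0 < x) (ha : 0 < a) : ContinuousAt (fun b => mellin (lorentzProduct x b) w) a := by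
  refine continuousAt_of_dominated
    (bound := fun t : ℝ => ‖(t : ℂ) ^ (w - 1) • lorentzProduct x (a / 2) t‖)
    (.of_forall fun b => aestronglyMeasurable_cpow_smul_lorentzProduct w x b) ?_
    (mellinConvergent_lorentzProduct hw₀ hw₂ hx (half_pos ha)).norm
    (.of_forall fun t => continuousAt_const.mul (continuousAt_lorentzProduct hx ha t))
  filter_upwards [lt_mem_nhds (half_lt_self ha)] with b hb
  refine .of_forall fun t => ?_
  rw [norm_smul, norm_smul]
  exact mul_le_mul_of_nonneg_left (norm_lorentzProduct_le hx (half_pos ha) hb.le t) (norm_nonneg _)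

theorem tendsto_sqQuotient {w : ℂ} (hw : w ≠ 0) {x : ℝ} (hx : 0 < x) :
    Tendsto (sqQuotient w x) (𝓝[≠] x) (𝓝 (sqQuotient w x x)) := by
  have hx' : (x : ℂ) ≠ 0 := ofReal_ne_zero.mpr hx.ne'
  have hslope := hasDerivAt_iff_tendsto_slope.mp (hasDerivAt_ofReal_cpow_const hx.ne' hw)
  have hinv : Tendsto (fun a : ℝ => ((a : ℂ) + x)⁻¹) (𝓝[≠] x) (𝓝 ((x : ℂ) + x)⁻¹) := by
    have hcont : ContinuousAt (fun a : ℝ => ((a : ℂ) + x)⁻¹) x :=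
      ContinuousAt.inv₀ (by fun_prop) (by simpa [← two_mul] using hx.ne')
    exact hcont.tendsto.mono_left nhdsWithin_le_nhds
  have hval : sqQuotient w x x = w * (x : ℂ) ^ (w - 1) * ((x : ℂ) + x)⁻¹ := by
    rw [sqQuotient, if_pos rfl, cpow_sub _ _ hx', cpow_sub _ _ hx', cpow_one, cpow_ofNat]
    field_simp
    ring
  rw [hval]
  refine (hslope.mul hinv).congr' ?_
  filter_upwards [self_mem_nhdsWithin] with a ha
  rw [sqQuotient, if_neg (Ne.symm ha), slope_def_module, real_smul, sq_sub_sq, ofReal_inv,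
    ofReal_sub, div_eq_mul_inv, mul_inv]
  ring

theorem hasMellin_lorentzProduct {w : ℂ} (hw₀ : 0 < w.re) (hw₂ : w.re < 2) {x a : ℝ}
    (hx : 0 < x) (ha : 0 < a) :
    HasMellin (lorentzProduct x a) w (π / 2 / Complex.sin (π * w / 2) * sqQuotient w x a) := by
  refine ⟨mellinConvergent_lorentzProduct hw₀ hw₂ hx ha, ?_⟩
  rcases eq_or_ne x a with rfl | hxa
  · have hw : w ≠ 0 := by rintro rfl; simp at hw₀
    refine tendsto_nhds_unique_of_eventuallyEq
      ((continuousAt_mellin_lorentzProduct hw₀ hw₂ hx hx).mono_left nhdsWithin_le_nhds)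
      ((tendsto_sqQuotient hw hx).const_mul _) ?_
    filter_upwards [self_mem_nhdsWithin, nhdsWithin_le_nhds (lt_mem_nhds hx)] with b hb hb₀
    exact (hasMellin_lorentzProduct_of_ne hw₀ hw₂ hx hb₀ (Ne.symm hb)).2
  · exact (hasMellin_lorentzProduct_of_ne hw₀ hw₂ hx ha hxa).2

end LorentzMellin

section DivisorQuotientSum

theorem sqQuotient_eq_add {x a : ℝ} (hx : 0 < x) (ha : 0 < a) (w : ℂ) :
    sqQuotient w x a = (a : ℂ) ^ (w - 2) + (x : ℂ) ^ 2 * sqQuotient (w - 2) x a := by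
  have hx' : (x : ℂ) ≠ 0 := ofReal_ne_zero.mpr hx.ne'
  have ha' : (a : ℂ) ≠ 0 := ofReal_ne_zero.mpr ha.ne'
  rcases eq_or_ne x a with rfl | hxa
  · simp only [sqQuotient, ↓reduceIte, cpow_sub _ _ hx', cpow_ofNat]
    field_simp
    ring
  · have hne := sq_sub_sq_ne_zero hx ha hxa
    simp only [sqQuotient, if_neg hxa, cpow_sub _ _ hx', cpow_sub _ _ ha', cpow_ofNat]
    field_simp
    ring

theorem differentiable_sqQuotient {x a : ℝ} (hx : 0 < x) (ha : 0 < a) :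
    Differentiable ℂ fun v : ℂ => sqQuotient v x a := by
  have ha' : (a : ℂ) ≠ 0 := ofReal_ne_zero.mpr ha.ne'
  have hx' : (x : ℂ) ≠ 0 := ofReal_ne_zero.mpr hx.ne'
  unfold sqQuotient
  split_ifs <;> fun_prop (disch := simp [ha', hx'])

theorem exists_inv_abs_sq_sub_sq_le (x : ℝ) :
    ∃ C, ∀ n : ℕ, |((n : ℝ) + 1) ^ 2 - x ^ 2|⁻¹ ≤ C * ((n : ℝ) + 1) ^ (-2 : ℝ) := by
  have htop : Tendsto (fun n : ℕ => (n : ℝ) + 1) atTop atTop :=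
    tendsto_atTop_add_const_right _ _ tendsto_natCast_atTop_atTop
  have hO : Asymptotics.IsEquivalent atTop (fun a : ℝ => a ^ 2 - x ^ 2) fun a => a ^ 2 := by
    refine Asymptotics.IsEquivalent.refl.sub_isLittleO ?_
    refine Asymptotics.isLittleO_const_left.mpr (.inr ?_)
    exact tendsto_norm_atTop_atTop.comp (tendsto_pow_atTop two_ne_zero)
  obtain ⟨C, hC⟩ := (Asymptotics.isBigO_nat_atTop_iff fun n h => by
    simp [Nat.cast_add_one_ne_zero] at h).mp (hO.inv.isBigO.comp_tendsto htop)
  refine ⟨C, fun n => (le_of_eq ?_).trans ((hC n).trans_eq ?_)⟩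
  · simp
  · simp [Real.rpow_neg (by positivity : (0 : ℝ) ≤ n + 1)]

theorem norm_cpow_le_exp {x : ℝ} (hx : 0 < x) (v : ℂ) :
    ‖(x : ℂ) ^ v‖ ≤ Real.exp (|Real.log x| * ‖v‖) := by
  rw [norm_cpow_eq_rpow_re_of_pos hx, Real.rpow_def_of_pos hx, Real.exp_le_exp]
  refine (le_abs_self _).trans ?_
  rw [abs_mul]
  gcongr
  exact abs_re_le_norm v

theorem exists_norm_sqQuotient_le {x : ℝ} (hx : 0 < x) (R : ℝ) :
    ∃ C, ∀ v : ℂ, v.re ≤ 0 → ‖v‖ ≤ R → ∀ n : ℕ,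
      ‖sqQuotient v x (n + 1)‖ ≤ C * ((n : ℝ) + 1) ^ (-2 : ℝ) := by
  obtain ⟨D, hD⟩ := exists_inv_abs_sq_sub_sq_le x
  refine ⟨R / 2 + (1 + Real.exp (|Real.log x| * R)) * D, fun v hv hvR n => ?_⟩
  have hn : (0 : ℝ) < n + 1 := by positivity
  have hD₀ : 0 ≤ D * ((n : ℝ) + 1) ^ (-2 : ℝ) := (by positivity : (0 : ℝ) ≤ _).trans (hD n)
  have hR : 0 ≤ R := (norm_nonneg v).trans hvR
  rw [add_mul, mul_assoc]
  rcases eq_or_ne x (n + 1) with hxn | hxn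
  · refine le_add_of_le_of_nonneg ?_ (by positivity)
    rw [sqQuotient, if_pos hxn, norm_div, norm_mul, norm_cpow_eq_rpow_re_of_pos hn, norm_ofNat,
      mul_div_right_comm]
    gcongr
    · linarith
    · rw [sub_re, re_ofNat]
      linarith
  · refine le_add_of_nonneg_of_le (by positivity) ?_
    rw [sqQuotient, if_neg hxn, div_eq_mul_inv, norm_mul, norm_inv]
    have hpow : ‖(((n : ℝ) + 1 : ℝ) : ℂ) ^ v‖ ≤ 1 := by
      rw [norm_cpow_eq_rpow_re_of_pos hn]
      exact Real.rpow_le_one_of_one_le_of_nonpos (by linarith [n.cast_nonneg (α := ℝ)]) hv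
    have hnum : ‖(((n : ℝ) + 1 : ℝ) : ℂ) ^ v - (x : ℂ) ^ v‖ ≤
        1 + Real.exp (|Real.log x| * R) := by
      refine (norm_sub_le _ _).trans (add_le_add hpow ((norm_cpow_le_exp hx v).trans ?_))
      gcongr
    refine mul_le_mul hnum ?_ (by positivity) (by positivity)
    rw [← ofReal_pow, ← ofReal_pow, ← ofReal_sub, norm_real]
    exact hD n

/-- The sum `∑ σ_{-s}(n) (n^v - x^v) / (n² - x²)`, which enters `fRam` with `v = s - 1`. -/
noncomputable def divisorQuotientSum (s : ℂ) (x : ℝ) (v : ℂ) : ℂ :=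
  ∑' n : ℕ, csigma (-s) (n + 1) * sqQuotient v x (n + 1)

variable {s : ℂ} {x : ℝ}

theorem exists_summable_norm_csigma_mul_sqQuotient_le (hs : -1 < s.re) (hx : 0 < x) (R : ℝ) :
    ∃ u : ℕ → ℝ, Summable u ∧ ∀ n (v : ℂ), v.re ≤ 0 → ‖v‖ ≤ R →
      ‖csigma (-s) (n + 1) * sqQuotient v x (n + 1)‖ ≤ u n := by
  obtain ⟨C, hC⟩ := exists_norm_sqQuotient_le hx R
  refine ⟨_, (summable_norm_csigma_neg_mul_rpow_neg_two hs).mul_left C, fun n v hv hvR => ?_⟩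
  rw [norm_mul, mul_left_comm]
  exact mul_le_mul_of_nonneg_left (hC v hv hvR n) (norm_nonneg _)

theorem summable_csigma_mul_sqQuotient (hs : -1 < s.re) (hx : 0 < x) {v : ℂ} (hv : v.re ≤ 0) :
    Summable fun n : ℕ => csigma (-s) (n + 1) * sqQuotient v x (n + 1) := by
  obtain ⟨u, hu, h⟩ := exists_summable_norm_csigma_mul_sqQuotient_le hs hx ‖v‖
  exact hu.of_norm_bounded fun n => h n v hv le_rfl

theorem differentiableOn_divisorQuotientSum (hs : -1 < s.re) (hx : 0 < x) :
    DifferentiableOn ℂ (divisorQuotientSum s x) {v | v.re < 0} := by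
  intro v₀ (hv₀ : v₀.re < 0)
  obtain ⟨u, hu, h⟩ := exists_summable_norm_csigma_mul_sqQuotient_le hs hx (‖v₀‖ + 1)
  have hopen : IsOpen ({v : ℂ | v.re < 0} ∩ {v | ‖v‖ < ‖v₀‖ + 1}) :=
    (isOpen_lt continuous_re continuous_const).inter (isOpen_lt continuous_norm continuous_const)
  have hdiff : DifferentiableOn ℂ (divisorQuotientSum s x)
      ({v : ℂ | v.re < 0} ∩ {v | ‖v‖ < ‖v₀‖ + 1}) :=
    differentiableOn_tsum_of_summable_norm hu (fun n => ((differentiable_sqQuotient hx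
      (by positivity)).const_mul _).differentiableOn) hopen
      fun n v hv => h n v (le_of_lt hv.1) (le_of_lt hv.2)
  exact (hdiff.differentiableAt
    (hopen.mem_nhds ⟨hv₀, lt_add_one ‖v₀‖⟩)).differentiableWithinAt

theorem hasSum_csigma_mul_sqQuotient (hs : -1 < s.re) (hx : 0 < x) {w : ℂ} (hw : w.re < 1)
    (hws : w.re < 1 + s.re) :
    HasSum (fun n : ℕ => csigma (-s) (n + 1) * sqQuotient w x (n + 1))
      (riemannZeta (2 - w + s) * riemannZeta (2 - w) +
        (x : ℂ) ^ 2 * divisorQuotientSum s x (w - 2)) := by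
  have hzeta := hasSum_csigma_mul_cpow_neg (a := -s) (z := 2 - w) (by simp; linarith)
    (by simp; linarith)
  have hquot := (summable_csigma_mul_sqQuotient hs hx (v := w - 2) (by simp; linarith)).hasSum
  rw [sub_neg_eq_add] at hzeta
  refine (hzeta.add (hquot.mul_left ((x : ℂ) ^ 2))).congr_fun fun n => ?_
  rw [sqQuotient_eq_add hx (by positivity), neg_sub, ofReal_add, ofReal_natCast, ofReal_one]
  ring

end DivisorQuotientSum

section TermwiseMellin

theorem hasSum_mellin_tsum {ι : Type*} [Countable ι] {f : ι → ℝ → ℂ} {w : ℂ}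
    (hf : ∀ i, MellinConvergent (f i) w)
    (hsum : Summable fun i => ∫ t in Set.Ioi (0 : ℝ), ‖(t : ℂ) ^ (w - 1) • f i t‖) :
    HasSum (fun i => mellin (f i) w) (mellin (fun t => ∑' i, f i t) w) := by
  have h := hasSum_integral_of_summable_integral_norm hf hsum
  simpa only [mellin, smul_eq_mul, tsum_mul_left] using h

theorem integral_norm_cpow_smul_eq_norm_mellin {f : ℝ → ℂ} (hf : ∀ t, (‖f t‖ : ℂ) = f t) (w : ℂ) :
    ∫ t in Set.Ioi (0 : ℝ), ‖(t : ℂ) ^ (w - 1) • f t‖ = ‖mellin f w.re‖ := by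
  have h : ((∫ t in Set.Ioi (0 : ℝ), ‖(t : ℂ) ^ (w - 1) • f t‖ : ℝ) : ℂ) = mellin f w.re := by
    rw [← integral_complex_ofReal, mellin]
    refine setIntegral_congr_fun measurableSet_Ioi fun t (ht : 0 < t) => ?_
    rw [norm_smul, norm_cpow_eq_rpow_re_of_pos ht, ofReal_mul, hf, ofReal_cpow ht.le, smul_eq_mul,
      sub_re, one_re, ofReal_sub, ofReal_one]
  rw [← h, norm_real, Real.norm_of_nonneg (integral_nonneg fun t => norm_nonneg _)]

theorem ofReal_norm_lorentzProduct (x a t : ℝ) :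
    (‖lorentzProduct x a t‖ : ℂ) = lorentzProduct x a t := by
  rw [norm_lorentzProduct, lorentzProduct]
  push_cast
  rfl

variable {s : ℂ} {x : ℝ}

theorem tsum_csigma_smul_lorentzProduct (t : ℝ) :
    ∑' n : ℕ, csigma (-s) (n + 1) • lorentzProduct x (n + 1) t =
      (t : ℂ) ^ 2 / ((x : ℂ) ^ 2 + (t : ℂ) ^ 2) * divisorLorentzSum s t := by
  rw [divisorLorentzSum, ← tsum_mul_left]
  refine tsum_congr fun n => ?_
  rw [lorentzProduct, smul_eq_mul]
  push_cast
  rw [← div_div, div_eq_mul_inv _ (((n : ℂ) + 1) ^ 2 + _), mul_left_comm]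

theorem mellin_mul_divisorLorentzSum (hs : -1 < s.re) (hx : 0 < x) {w : ℂ} (hw₀ : 0 < w.re)
    (hw : w.re < 1) (hws : w.re < 1 + s.re) :
    mellin (fun t : ℝ => (t : ℂ) ^ 2 / ((x : ℂ) ^ 2 + (t : ℂ) ^ 2) * divisorLorentzSum s t) w =
      π / 2 / Complex.sin (π * w / 2) * (riemannZeta (2 - w + s) * riemannZeta (2 - w) +
        (x : ℂ) ^ 2 * divisorQuotientSum s x (w - 2)) := by
  have hterm : ∀ (n : ℕ) {z : ℂ}, z.re = w.re → HasMellin (lorentzProduct x (n + 1)) z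
      (π / 2 / Complex.sin (π * z / 2) * sqQuotient z x (n + 1)) := fun n z hz =>
    hasMellin_lorentzProduct (hz ▸ hw₀) (by linarith) hx (by positivity)
  have hnorm : Summable fun n : ℕ => ∫ t in Set.Ioi (0 : ℝ),
      ‖(t : ℂ) ^ (w - 1) • csigma (-s) (n + 1) • lorentzProduct x (n + 1) t‖ := by
    have h := (hasSum_csigma_mul_sqQuotient hs hx (w := w.re) hw hws).summable.norm.mul_left
      ‖π / 2 / Complex.sin (π * w.re / 2)‖
    refine h.congr fun n => ?_
    simp only [smul_comm _ (csigma (-s) (n + 1)), norm_smul (csigma (-s) (n + 1)),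
      integral_const_mul]
    rw [integral_norm_cpow_smul_eq_norm_mellin (ofReal_norm_lorentzProduct x (n + 1)),
      (hterm n (ofReal_re _)).2, norm_mul, norm_mul]
    ring
  have h := hasSum_mellin_tsum (fun n => (hterm n rfl).1.const_smul (csigma (-s) (n + 1))) hnorm
  simp only [tsum_csigma_smul_lorentzProduct, mellin_const_smul, (hterm _ rfl).2] at h
  refine h.unique (((hasSum_csigma_mul_sqQuotient hs hx hw hws).mul_left _).congr_fun fun n => ?_)
  rw [smul_eq_mul, mul_left_comm]

end TermwiseMellin

section KoshliakovMellin

variable {s : ℂ} {x : ℝ}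

/-- The integrand of the representation of `fRam`, stripped of the power `t^s`. -/
noncomputable def koshliakovQuotient (s : ℂ) (x t : ℝ) : ℂ :=
  t / ((x : ℂ) ^ 2 + (t : ℂ) ^ 2) * koshliakovRemainder s t

theorem continuousOn_koshliakovQuotient (hs : -1 < s.re) (hs₀ : s ≠ 0) (hs₁ : s.re < 1)
    (hx : 0 < x) : ContinuousOn (koshliakovQuotient s x) (Set.Ioi 0) :=
  (ContinuousOn.div (by fun_prop) (by fun_prop) fun t _ => ofReal_sq_add_sq_ne_zero hx t).mul
    (continuousOn_koshliakovRemainder hs hs₀ hs₁)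

theorem koshliakovQuotient_isBigO_atTop (hs : -1 < s.re) (x : ℝ) :
    koshliakovQuotient s x =O[atTop] fun t : ℝ => t ^ (-2 : ℝ) := by
  have hfac : (fun t : ℝ => t / ((x : ℂ) ^ 2 + (t : ℂ) ^ 2)) =O[atTop]
      fun t : ℝ => t ^ (-1 : ℝ) := by
    refine .of_bound 1 ?_
    filter_upwards [eventually_gt_atTop 0] with t ht
    rw [norm_div, ← ofReal_pow, ← ofReal_pow, ← ofReal_add, norm_real, norm_real,
      Real.norm_of_nonneg ht.le, Real.norm_of_nonneg (by positivity),
      Real.norm_of_nonneg (by positivity), Real.rpow_neg_one, one_mul, div_le_iff₀ (by positivity),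
      inv_mul_eq_div, le_div_iff₀ ht]
    nlinarith [sq_nonneg x]
  refine (hfac.mul (koshliakovRemainder_isBigO_atTop hs)).congr' .rfl ?_
  filter_upwards [eventually_gt_atTop 0] with t ht
  rw [← Real.rpow_add ht]
  norm_num

theorem koshliakovQuotient_isBigO_nhdsGT_zero (hs : -1 < s.re) (hs₀ : s ≠ 0) (hs₁ : s.re < 1)
    (hx : 0 < x) : koshliakovQuotient s x =O[𝓝[>] 0] fun t : ℝ => t ^ (-0 : ℝ) := by
  have hinv : (fun t : ℝ => ((x : ℂ) ^ 2 + (t : ℂ) ^ 2)⁻¹) =O[𝓝[>] 0] fun _ => (1 : ℝ) := by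
    have hcont : Continuous fun t : ℝ => ((x : ℂ) ^ 2 + (t : ℂ) ^ 2)⁻¹ :=
      Continuous.inv₀ (by fun_prop) (ofReal_sq_add_sq_ne_zero hx)
    exact (hcont.tendsto 0).isBigO_one ℝ |>.mono nhdsWithin_le_nhds
  have hid : (fun t : ℝ => (t : ℂ)) =O[𝓝[>] 0] fun t : ℝ => t :=
    .of_bound 1 (.of_forall fun t => by rw [norm_real, one_mul])
  refine ((hid.mul hinv).mul (koshliakovRemainder_isBigO_nhdsGT_zero hs hs₀ hs₁)).congr' .rfl ?_
  filter_upwards [self_mem_nhdsWithin] with t (ht : 0 < t)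
  rw [Real.rpow_neg_one, neg_zero, Real.rpow_zero, mul_one, mul_inv_cancel₀ ht.ne']

theorem mellinConvergent_koshliakovQuotient (hs : -1 < s.re) (hs₀ : s ≠ 0) (hs₁ : s.re < 1)
    (hx : 0 < x) {w : ℂ} (hw₀ : 0 < w.re) (hw₂ : w.re < 2) :
    MellinConvergent (koshliakovQuotient s x) w :=
  mellinConvergent_of_isBigO_rpow
    ((continuousOn_koshliakovQuotient hs hs₀ hs₁ hx).locallyIntegrableOn measurableSet_Ioi)
    (koshliakovQuotient_isBigO_atTop hs x) hw₂
    (koshliakovQuotient_isBigO_nhdsGT_zero hs hs₀ hs₁ hx) hw₀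

theorem differentiableAt_mellin_koshliakovQuotient (hs : -1 < s.re) (hs₀ : s ≠ 0) (hs₁ : s.re < 1)
    (hx : 0 < x) {w : ℂ} (hw₀ : 0 < w.re) (hw₂ : w.re < 2) :
    DifferentiableAt ℂ (mellin (koshliakovQuotient s x)) w :=
  mellin_differentiableAt_of_isBigO_rpow
    ((continuousOn_koshliakovQuotient hs hs₀ hs₁ hx).locallyIntegrableOn measurableSet_Ioi)
    (koshliakovQuotient_isBigO_atTop hs x) hw₂
    (koshliakovQuotient_isBigO_nhdsGT_zero hs hs₀ hs₁ hx) hw₀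

theorem hasMellin_cpow_smul_inv_sq_add_sq (hx : 0 < x) {c w : ℂ} (hw₁ : -1 < (w + c).re)
    (hw₂ : (w + c).re < 1) :
    HasMellin (fun t : ℝ => (t : ℂ) ^ (c + 1) • ((x : ℂ) ^ 2 + (t : ℂ) ^ 2)⁻¹) w
      (π / 2 * (x : ℂ) ^ (w + c - 1) / Complex.cos (π * (w + c) / 2)) := by
  have h := hasMellin_inv_sq_add_sq hx (z := w + (c + 1)) (by simp at hw₁ ⊢; linarith)
    (by simp at hw₂ ⊢; linarith)
  refine ⟨MellinConvergent.cpow_smul.mpr h.1, ?_⟩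
  rw [mellin_cpow_smul, h.2, show π * (w + (c + 1)) / 2 = π * (w + c) / 2 + π / 2 by ring,
    Complex.sin_add_pi_div_two, show w + (c + 1) - 2 = w + c - 1 by ring]

theorem mul_divisorLorentzSum_eq (hs : -1 < s.re) (hs₀ : s ≠ 0) (hs₁ : s.re < 1) {t : ℝ}
    (ht : 0 < t) :
    (t : ℂ) ^ 2 / ((x : ℂ) ^ 2 + (t : ℂ) ^ 2) * divisorLorentzSum s t =
      (π : ℂ) • (koshliakovQuotient s x t +
        ((riemannZeta (1 - s) / (2 * Complex.cos (π * s / 2))) •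
            (t : ℂ) ^ (-s + 1) • ((x : ℂ) ^ 2 + (t : ℂ) ^ 2)⁻¹ +
          (riemannZeta (1 + s) / 2) •
            (t : ℂ) ^ (0 + 1 : ℂ) • ((x : ℂ) ^ 2 + (t : ℂ) ^ 2)⁻¹)) := by
  have hπ : (π : ℂ) ≠ 0 := ofReal_ne_zero.mpr Real.pi_ne_zero
  simp only [koshliakovQuotient, koshliakovRemainder_eq hs hs₀ hs₁ ht,
    cpow_add _ _ (ofReal_ne_zero.mpr ht.ne'), cpow_one, cpow_zero, smul_eq_mul]
  field_simp
  ring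

theorem mellin_congr {E : Type*} [NormedAddCommGroup E] [NormedSpace ℂ E] {f g : ℝ → E} (w : ℂ)
    (h : ∀ t, 0 < t → f t = g t) : mellin f w = mellin g w :=
  setIntegral_congr_fun measurableSet_Ioi fun t ht => congrArg ((t : ℂ) ^ (w - 1) • ·) (h t ht)

/-- The part of the Mellin transform of `koshliakovQuotient` whose two terms have poles at `1 + s`
that cancel each other. -/
noncomputable def koshliakovPolarPart (s : ℂ) (x : ℝ) (w : ℂ) : ℂ :=
  riemannZeta (2 - w) / (2 * Complex.sin (π * w / 2)) * riemannZeta (2 - w + s)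
    - riemannZeta (1 - s) / (2 * Complex.cos (π * s / 2)) *
      (π / 2 * (x : ℂ) ^ (w - s - 1) / Complex.cos (π * (w - s) / 2))

/-- The part of the Mellin transform of `koshliakovQuotient` that is regular at `1 + s`. -/
noncomputable def koshliakovRegularPart (s : ℂ) (x : ℝ) (w : ℂ) : ℂ :=
  (x : ℂ) ^ 2 * divisorQuotientSum s x (w - 2) / (2 * Complex.sin (π * w / 2))
    - riemannZeta (1 + s) / 2 * (π / 2 * (x : ℂ) ^ (w - 1) / Complex.cos (π * w / 2))

theorem mellin_koshliakovQuotient_eq_of_re_lt (hs : -1 < s.re) (hs₀ : s ≠ 0) (hs₁ : s.re < 1)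
    (hx : 0 < x) {w : ℂ} (hw₀ : 0 < w.re) (hw : w.re < 1) (hws : w.re < 1 + s.re) :
    mellin (koshliakovQuotient s x) w =
      koshliakovPolarPart s x w + koshliakovRegularPart s x w := by
  have hK := mellinConvergent_koshliakovQuotient hs hs₀ hs₁ hx hw₀ (by linarith)
  obtain ⟨hA, hA_eq⟩ := hasMellin_cpow_smul_inv_sq_add_sq hx (c := -s) (w := w)
    (by simp; linarith) (by simp; linarith)
  obtain ⟨hB, hB_eq⟩ := hasMellin_cpow_smul_inv_sq_add_sq hx (c := 0) (w := w)
    (by simp; linarith) (by simpa)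
  have hAB := hasMellin_add (hA.const_smul (riemannZeta (1 - s) / (2 * Complex.cos (π * s / 2))))
    (hB.const_smul (riemannZeta (1 + s) / 2))
  have h := mellin_congr w fun t ht => mul_divisorLorentzSum_eq (x := x) hs hs₀ hs₁ ht
  rw [mellin_mul_divisorLorentzSum hs hx hw₀ hw hws, mellin_const_smul, (hasMellin_add hK hAB.1).2,
    hAB.2, mellin_const_smul, mellin_const_smul, hA_eq, hB_eq, add_zero, ← sub_eq_add_neg] at h
  simp only [smul_eq_mul] at h
  have hπ : (π : ℂ) ≠ 0 := ofReal_ne_zero.mpr Real.pi_ne_zero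
  rw [koshliakovPolarPart, koshliakovRegularPart]
  apply mul_left_cancel₀ hπ
  linear_combination -h

end KoshliakovMellin

section Continuation

variable {s : ℂ} {x : ℝ}

theorem meromorphicAt_koshliakovPolarPart (s : ℂ) (hx : 0 < x) (w : ℂ) :
    MeromorphicAt (koshliakovPolarPart s x) w := by
  have hpow := (analyticAt_const_cpow (z := w) (f := fun w => w - s - 1)
    (ofReal_ne_zero.mpr hx.ne') (by fun_prop)).meromorphicAt
  have hzeta : MeromorphicAt (fun w => riemannZeta (2 - w)) w :=
    (meromorphicAt_riemannZeta (2 - w)).comp_analyticAt (by fun_prop)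
  have hzeta_add : MeromorphicAt (fun w => riemannZeta (2 - w + s)) w :=
    (meromorphicAt_riemannZeta (2 - w + s)).comp_analyticAt (g := fun w => 2 - w + s) (by fun_prop)
  unfold koshliakovPolarPart
  fun_prop

theorem analyticAt_divisorQuotientSum_sub_two (hs : -1 < s.re) (hx : 0 < x) {w : ℂ}
    (hw : w.re < 2) : AnalyticAt ℂ (fun w => divisorQuotientSum s x (w - 2)) w := by
  have hopen : IsOpen {v : ℂ | v.re < 0} := isOpen_lt continuous_re continuous_const
  exact ((differentiableOn_divisorQuotientSum hs hx).analyticAt (hopen.mem_nhds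
    (show (w - 2).re < 0 by simpa using hw))).fun_comp (f := fun w : ℂ => w - 2) (by fun_prop)

theorem meromorphicAt_koshliakovRegularPart (hs : -1 < s.re) (hx : 0 < x) {w : ℂ}
    (hw : w.re < 2) : MeromorphicAt (koshliakovRegularPart s x) w := by
  have hpow := (analyticAt_const_cpow (z := w) (f := fun w => w - 1)
    (ofReal_ne_zero.mpr hx.ne') (by fun_prop)).meromorphicAt
  have hsum := (analyticAt_divisorQuotientSum_sub_two hs hx hw).meromorphicAt
  unfold koshliakovRegularPart
  fun_prop

theorem isPreconnected_strip (a b : ℝ) : IsPreconnected {z : ℂ | a < z.re ∧ z.re < b} :=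
  ((convex_halfSpace_re_gt a).inter (convex_halfSpace_re_lt b)).isPreconnected

theorem isOpen_strip (a b : ℝ) : IsOpen {z : ℂ | a < z.re ∧ z.re < b} :=
  (isOpen_lt continuous_const continuous_re).inter (isOpen_lt continuous_re continuous_const)

theorem mellin_koshliakovQuotient_eventuallyEq (hs : -1 < s.re) (hs₀ : s ≠ 0) (hs₁ : s.re < 1)
    (hx : 0 < x) {w : ℂ} (hw₀ : 0 < w.re) (hw₂ : w.re < 2) :
    mellin (koshliakovQuotient s x) =ᶠ[𝓝[≠] w]
      koshliakovPolarPart s x + koshliakovRegularPart s x := by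
  obtain ⟨r, hr₀, hr⟩ := exists_between (show 0 < min 1 (1 + s.re) from
    lt_min one_pos (by linarith))
  have hmellin : DifferentiableOn ℂ (mellin (koshliakovQuotient s x)) {z | 0 < z.re ∧ z.re < 2} :=
    fun z hz => (differentiableAt_mellin_koshliakovQuotient hs hs₀ hs₁ hx
      hz.1 hz.2).differentiableWithinAt
  refine eventuallyEq_of_meromorphicOn_of_isPreconnected (z₀ := r)
    (fun z hz => (hmellin.analyticAt ((isOpen_strip 0 2).mem_nhds hz)).meromorphicAt)
    (fun z hz => (meromorphicAt_koshliakovPolarPart s hx z).add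
      (meromorphicAt_koshliakovRegularPart hs hx hz.2))
    (isPreconnected_strip 0 2) ?_ ⟨hw₀, hw₂⟩ (nhdsWithin_le_nhds ?_)
  · exact ⟨hr₀, by linarith [hr.trans_le (min_le_left _ _), ofReal_re r]⟩
  · filter_upwards [(isOpen_strip 0 (min 1 (1 + s.re))).mem_nhds (x := (r : ℂ)) ⟨hr₀, hr⟩]
      with z ⟨hz₀, hz⟩
    exact mellin_koshliakovQuotient_eq_of_re_lt hs hs₀ hs₁ hx hz₀ (lt_min_iff.mp hz).1
      (lt_min_iff.mp hz).2

end Continuation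

section PolarLimit

theorem tendsto_inv_sin_sub_inv :
    Tendsto (fun z : ℂ => (Complex.sin z)⁻¹ - z⁻¹) (𝓝[≠] 0) (𝓝 0) := by
  have hcube : (fun z : ℂ => z - Complex.sin z) =O[𝓝 0] fun z => z ^ 3 := by
    refine .of_bound 1 ?_
    filter_upwards [Metric.closedBall_mem_nhds (0 : ℂ) one_pos] with z hz
    rw [mem_closedBall_zero_iff] at hz
    have h₅ : ‖z‖ ^ 5 ≤ ‖z‖ ^ 3 := pow_le_pow_of_le_one (norm_nonneg z) hz (by norm_num)
    calc ‖z - Complex.sin z‖ = ‖z ^ 3 / 6 - (Complex.sin z - (z - z ^ 3 / 6))‖ := by ring_nf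
      _ ≤ ‖z‖ ^ 3 / 6 + ‖z‖ ^ 5 / 100 := by
        refine (norm_sub_le _ _).trans (add_le_add ?_ (Complex.sin_bound hz))
        rw [norm_div, norm_pow, norm_ofNat]
      _ ≤ 1 * ‖z ^ 3‖ := by
        rw [norm_pow]
        linarith [pow_nonneg (norm_nonneg z) 3]
  have hsin : Asymptotics.IsEquivalent (𝓝 0) Complex.sin fun z => z := by
    have h := (hasDerivAt_iff_isLittleO.mp (Complex.hasDerivAt_sin 0))
    simpa using! h
  have hinv : (fun z => (Complex.sin z)⁻¹) =O[𝓝 0] fun z => z⁻¹ := hsin.inv.isBigO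
  have hprod : (fun z : ℂ => (Complex.sin z)⁻¹ - z⁻¹) =O[𝓝[≠] 0] fun z => z := by
    refine (((hcube.mul hinv).mul (Asymptotics.isBigO_refl (fun z : ℂ => z⁻¹) _)).mono
      nhdsWithin_le_nhds).congr' ?_ ?_
    · have hne := (Complex.hasDerivAt_sin 0).eventually_ne (c := 0) (by simp)
      filter_upwards [hne, self_mem_nhdsWithin] with z hz (hz₀ : z ≠ 0)
      field_simp
    · filter_upwards [self_mem_nhdsWithin] with z (hz₀ : z ≠ 0)
      field_simp
  exact hprod.trans_tendsto (tendsto_id.mono_left nhdsWithin_le_nhds)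

theorem tendsto_neg_secant_sub_inv :
    Tendsto (fun z : ℂ => -(π / 2 / Complex.cos (π * z / 2)) - (z - 1)⁻¹) (𝓝[≠] 1) (𝓝 0) := by
  have hlin : Tendsto (fun z : ℂ => π / 2 * (z - 1)) (𝓝[≠] 1) (𝓝[≠] 0) := by
    have h := (((hasDerivAt_id (1 : ℂ)).sub_const 1).const_mul (π / 2 : ℂ)).tendsto_nhdsNE
      (by simp)
    simpa using! h
  have h := (tendsto_inv_sin_sub_inv.comp hlin).const_mul (π / 2 : ℂ)
  rw [mul_zero] at h
  refine h.congr fun z => ?_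
  rw [Function.comp_apply, show π * z / 2 = π / 2 * (z - 1) + π / 2 by ring,
    Complex.cos_add_pi_div_two, mul_inv, mul_sub, ← mul_assoc, mul_inv_cancel₀ (by simp)]
  ring

theorem tendsto_mul_sub_div_of_hasDerivAt {G p : ℂ → ℂ} {a G' c : ℂ} (hG : HasDerivAt G G' a)
    (hp : Tendsto (fun w => p w - (w - a)⁻¹) (𝓝[≠] a) (𝓝 c)) :
    Tendsto (fun w => G w * p w - G a / (w - a)) (𝓝[≠] a) (𝓝 (G a * c + G')) := by
  refine (((hG.continuousAt.mono_left nhdsWithin_le_nhds).mul hp).add hG.tendsto_slope).congr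
    fun w => ?_
  rw [slope_def_field]
  ring

variable {s : ℂ} {x : ℝ}

theorem hasDerivAt_riemannZeta_two_sub_div_sin (hs : -1 < s.re) (hs₀ : s ≠ 0) (hs₁ : s.re < 1) :
    HasDerivAt (fun w => riemannZeta (2 - w) / (2 * Complex.sin (π * w / 2)))
      (riemannZeta (1 - s) / (2 * Complex.cos (π * s / 2)) * (π / 2) * Complex.tan (π * s / 2) -
        deriv riemannZeta (1 - s) / (2 * Complex.cos (π * s / 2))) (1 + s) := by
  have hcos := cos_pi_mul_div_two_ne_zero hs (by linarith) fun h => by simp [h] at hs₁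
  have hzeta_arg : 2 - (1 + s) = 1 - s := by ring
  have hzeta : HasDerivAt (fun w => riemannZeta (2 - w)) (-deriv riemannZeta (1 - s)) (1 + s) := by
    have h : HasDerivAt riemannZeta (deriv riemannZeta (1 - s)) (2 - (1 + s)) := by
      rw [hzeta_arg]
      exact (differentiableAt_riemannZeta (by simpa using hs₀)).hasDerivAt
    exact h.comp_const_sub 2 (1 + s)
  have hsin := ((((hasDerivAt_id (1 + s)).const_mul (π : ℂ)).div_const 2).csin).const_mul 2
  refine (hzeta.div hsin (by simpa [sin_pi_mul_one_add_div_two] using hcos)).congr_deriv ?_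
  simp only [id, sin_pi_mul_one_add_div_two, cos_pi_mul_one_add_div_two, hzeta_arg, Complex.tan]
  field_simp
  ring

theorem tendsto_neg_riemannZeta_two_sub_add (s : ℂ) :
    Tendsto (fun w => -riemannZeta (2 - w + s) - (w - (1 + s))⁻¹) (𝓝[≠] (1 + s))
      (𝓝 (-Real.eulerMascheroniConstant)) := by
  have hlin : Tendsto (fun w => 2 - w + s) (𝓝[≠] (1 + s)) (𝓝[≠] 1) := by
    have h := (((hasDerivAt_id (1 + s)).const_sub 2).add_const s).tendsto_nhdsNE (by simp)
    rwa [id, show 2 - (1 + s) + s = 1 by ring] at h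
  refine (tendsto_riemannZeta_sub_one_div.comp hlin).neg.congr fun w => ?_
  rw [Function.comp_apply, show 2 - w + s - 1 = -(w - (1 + s)) by ring, one_div, inv_neg]
  ring

theorem tendsto_koshliakovPolarPart (hs : -1 < s.re) (hs₀ : s ≠ 0) (hs₁ : s.re < 1) (hx : 0 < x) :
    Tendsto (koshliakovPolarPart s x) (𝓝[≠] (1 + s))
      (𝓝 (riemannZeta (1 - s) / (2 * Complex.cos (π * s / 2)) *
          (Real.eulerMascheroniConstant + Real.log x - π / 2 * Complex.tan (π * s / 2)) +
        deriv riemannZeta (1 - s) / (2 * Complex.cos (π * s / 2)))) := by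
  have hlin : Tendsto (fun w => w - s) (𝓝[≠] (1 + s)) (𝓝[≠] 1) := by
    have h := ((hasDerivAt_id (1 + s)).sub_const s).tendsto_nhdsNE (by simp)
    rwa [id, add_sub_cancel_right] at h
  have hpow : HasDerivAt (fun w => (x : ℂ) ^ (w - s - 1)) (Real.log x) (1 + s) := by
    refine ((((hasDerivAt_id (1 + s)).sub_const s).sub_const 1).const_cpow
      (.inl (ofReal_ne_zero.mpr hx.ne'))).congr_deriv ?_
    simp [ofReal_log hx.le]
  have hzeta_lim := tendsto_mul_sub_div_of_hasDerivAt
    (hasDerivAt_riemannZeta_two_sub_div_sin hs hs₀ hs₁) (tendsto_neg_riemannZeta_two_sub_add s)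
  have hsec_lim := tendsto_mul_sub_div_of_hasDerivAt
    (p := fun w => -(π / 2 / Complex.cos (π * (w - s) / 2))) hpow
    ((tendsto_neg_secant_sub_inv.comp hlin).congr fun w => by
      rw [Function.comp_apply, sub_sub, add_comm s])
  have hzeta_arg : 2 - (1 + s) = 1 - s := by ring
  rw [sin_pi_mul_one_add_div_two, hzeta_arg] at hzeta_lim
  simp only [add_sub_cancel_right, sub_self, cpow_zero] at hsec_lim
  convert! (hsec_lim.const_mul (riemannZeta (1 - s) / (2 * Complex.cos (π * s / 2)))).sub hzeta_lim
    using 2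
  · rw [koshliakovPolarPart]
    ring
  · ring

theorem continuousAt_koshliakovRegularPart (hs : -1 < s.re) (hs₀ : s ≠ 0) (hs₁ : s.re < 1)
    (hx : 0 < x) : ContinuousAt (koshliakovRegularPart s x) (1 + s) := by
  have hsum := (analyticAt_divisorQuotientSum_sub_two hs hx (w := 1 + s)
    (by simp; linarith)).continuousAt
  have hpow := (analyticAt_const_cpow (z := 1 + s) (f := fun w => w - 1)
    (ofReal_ne_zero.mpr hx.ne') (by fun_prop)).continuousAt
  have hsin := sin_pi_mul_div_two_ne_zero (z := 1 + s) (by simp; linarith) (by simp; linarith)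
    fun h => by have := congrArg re h; simp at this; linarith
  have hcos := cos_pi_mul_div_two_ne_zero (z := 1 + s) (by simp; linarith) (by simp; linarith)
    (by simp [hs₀])
  unfold koshliakovRegularPart
  fun_prop (disch := simp [hsin])

theorem mellin_koshliakovQuotient_one_add (hs : -1 < s.re) (hs₀ : s ≠ 0) (hs₁ : s.re < 1)
    (hx : 0 < x) :
    mellin (koshliakovQuotient s x) (1 + s) =
      riemannZeta (1 - s) / (2 * Complex.cos (π * s / 2)) *
          (Real.eulerMascheroniConstant + Real.log x - π / 2 * Complex.tan (π * s / 2)) +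
        deriv riemannZeta (1 - s) / (2 * Complex.cos (π * s / 2)) +
        koshliakovRegularPart s x (1 + s) := by
  have hw₀ : 0 < (1 + s).re := by rw [add_re, one_re]; linarith
  have hw₂ : (1 + s).re < 2 := by rw [add_re, one_re]; linarith
  exact tendsto_nhds_unique_of_eventuallyEq
    ((differentiableAt_mellin_koshliakovQuotient hs hs₀ hs₁ hx hw₀ hw₂).continuousAt.mono_left
      nhdsWithin_le_nhds)
    ((tendsto_koshliakovPolarPart hs hs₀ hs₁ hx).add
      ((continuousAt_koshliakovRegularPart hs hs₀ hs₁ hx).mono_left nhdsWithin_le_nhds))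
    (mellin_koshliakovQuotient_eventuallyEq hs hs₀ hs₁ hx hw₀ hw₂)

end PolarLimit

section ClosedForm

variable {s : ℂ} {x : ℝ}

theorem fRam_eq_divisorQuotientSum (s : ℂ) (x : ℝ) :
    fRam x s =
      x ^ (s / 2) * riemannZeta (1 + s) / (2 * Complex.sin (π * s / 2)) +
        x ^ (2 - s / 2) / (π * Complex.cos (π * s / 2)) * divisorQuotientSum s x (s - 1) -
        2 ^ (-s) * π ^ (-1 - s) * x ^ (-s / 2) *
          (Complex.Gamma s * riemannZeta s *
              (π * Complex.tan (π * s / 2) -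
                2 * (Real.eulerMascheroniConstant + Real.log x)) -
            ((2 * π : ℝ) : ℂ) ^ s * deriv riemannZeta (1 - s) / Complex.cos (π * s / 2)) := by
  have hsum : divisorQuotientSum s x (s - 1) = ∑' n : ℕ, csigma (-s) (n + 1) *
      (if x = ((n : ℝ) + 1) then (s - 1) * ((n : ℂ) + 1) ^ (s - 3) / 2
        else (((n : ℂ) + 1) ^ (s - 1) - (x : ℂ) ^ (s - 1)) /
          (((n : ℂ) + 1) ^ 2 - (x : ℂ) ^ 2)) := by
    refine tsum_congr fun n => ?_
    rw [sqQuotient, show s - 1 - 2 = s - 3 by ring]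
    push_cast
    rfl
  rw [fRam, hsum]

theorem two_cpow_neg_mul_pi_cpow (s : ℂ) :
    (2 : ℂ) ^ (-s) * (π : ℂ) ^ (-1 - s) = ((2 * π : ℝ) : ℂ) ^ (-s) / π := by
  rw [ofReal_mul, mul_cpow_ofReal_nonneg zero_le_two Real.pi_pos.le, neg_sub_left, neg_add,
    ← sub_eq_add_neg, cpow_sub _ _ (ofReal_ne_zero.mpr Real.pi_ne_zero), cpow_one, ofReal_ofNat,
    mul_div_assoc]

theorem koshliakovRegularPart_one_add (s : ℂ) (x : ℝ) :
    koshliakovRegularPart s x (1 + s) =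
      x ^ 2 * divisorQuotientSum s x (s - 1) / (2 * Complex.cos (π * s / 2)) +
        π / 4 * riemannZeta (1 + s) * x ^ s / Complex.sin (π * s / 2) := by
  rw [koshliakovRegularPart, sin_pi_mul_one_add_div_two, cos_pi_mul_one_add_div_two,
    add_sub_cancel_left, show 1 + s - 2 = s - 1 by ring]
  ring

theorem fRam_eq_mellin_koshliakovQuotient (hs : -1 < s.re) (hs₀ : s ≠ 0) (hs₁ : s.re < 1)
    (hx : 0 < x) :
    fRam x s = 2 / π * x ^ (-s / 2) * mellin (koshliakovQuotient s x) (1 + s) := by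
  have hxC : (x : ℂ) ≠ 0 := ofReal_ne_zero.mpr hx.ne'
  have hx_pow : (x : ℂ) ^ (s / 2) = x ^ (-s / 2) * x ^ s := by
    rw [← cpow_add _ _ hxC]; ring_nf
  have hx_pow_two : (x : ℂ) ^ (2 - s / 2) = x ^ (-s / 2) * x ^ 2 := by
    rw [← cpow_ofNat, ← cpow_add _ _ hxC]; ring_nf
  have htwo_pi : ((2 * π : ℝ) : ℂ) ^ (-s) * ((2 * π : ℝ) : ℂ) ^ s = 1 := by
    rw [← cpow_add _ _ (ofReal_ne_zero.mpr Real.two_pi_pos.ne'), neg_add_cancel, cpow_zero]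
  have hgamma : 2 ^ (-s) * π ^ (-1 - s) * (Complex.Gamma s * riemannZeta s) =
      riemannZeta (1 - s) / (2 * Complex.cos (π * s / 2)) / π := by
    rw [← Gamma_mul_riemannZeta_mul_two_pi_cpow_neg hs hs₀ hs₁, two_cpow_neg_mul_pi_cpow]
    ring
  have hderiv : (2 : ℂ) ^ (-s) * π ^ (-1 - s) * ((2 * π : ℝ) : ℂ) ^ s = 1 / π := by
    rw [two_cpow_neg_mul_pi_cpow, div_mul_eq_mul_div, htwo_pi]
  have hpi : (π : ℂ)⁻¹ * π = 1 := inv_mul_cancel₀ (ofReal_ne_zero.mpr Real.pi_ne_zero)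
  rw [fRam_eq_divisorQuotientSum, mellin_koshliakovQuotient_one_add hs hs₀ hs₁ hx,
    koshliakovRegularPart_one_add, hx_pow, hx_pow_two]
  linear_combination
    (-(x : ℂ) ^ (-s / 2) * (π * Complex.tan (π * s / 2) -
        2 * (Real.eulerMascheroniConstant + Real.log x))) * hgamma +
      (x : ℂ) ^ (-s / 2) * deriv riemannZeta (1 - s) / Complex.cos (π * s / 2) * hderiv -
      (x : ℂ) ^ (-s / 2) * x ^ s * riemannZeta (1 + s) / (2 * Complex.sin (π * s / 2)) * hpi

theorem integral_eq_mellin_koshliakovQuotient (s : ℂ) (x : ℝ) :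
    ∫ t in Set.Ioi (0 : ℝ), (t : ℂ) ^ (1 + s / 2) / ((x : ℂ) ^ 2 + (t : ℂ) ^ 2) *
        (phiK t s - riemannZeta s / (2 * π) * (t : ℂ) ^ (s / 2 - 1)) =
      mellin (koshliakovQuotient s x) (1 + s) := by
  refine setIntegral_congr_fun measurableSet_Ioi fun t (ht : 0 < t) => ?_
  have htC : (t : ℂ) ≠ 0 := ofReal_ne_zero.mpr ht.ne'
  have hpow : (t : ℂ) ^ (1 + s / 2) = t ^ (1 + s - 1) * t * t ^ (-s / 2) := by
    nth_rw 3 [← cpow_one (t : ℂ)]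
    rw [← cpow_add _ _ htC, ← cpow_add _ _ htC]
    ring_nf
  simp only [koshliakovQuotient, koshliakovRemainder, hpow, smul_eq_mul]
  ring

end ClosedForm

theorem fRam_integral_representation
    (s : ℂ) (hs0 : s ≠ 0) (hs1 : -1 < s.re) (hs2 : s.re < 1) (x : ℝ) (hx : 0 < x) :
    fRam x s
    = (2 / (π : ℂ)) * (x : ℂ) ^ (-s / 2) *
        ∫ t in Set.Ioi (0 : ℝ),
          ((t : ℂ) ^ (1 + s / 2) / ((x : ℂ) ^ 2 + (t : ℂ) ^ 2)) *
            (phiK t s - (riemannZeta s / (2 * (π : ℂ))) * (t : ℂ) ^ (s / 2 - 1)) := by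
  rw [fRam_eq_mellin_koshliakovQuotient hs1 hs0 hs2 hx, integral_eq_mellin_koshliakovQuotient]
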